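/- Let ψ : ℝ^d → ℝ be ψ(x) = ∏_{i=1}^d sin(πx_i)/(πx_i), and for n ≥ 1 let (u(n,·)∗ψ)(v) = ∫_{ℝ^d} u(n,y) ψ(v−y) dy. Then n^d · ∑_{v∈ℤ^d} ( x_n(v) − (u(n,·)∗ψ)(v) )² → 0 as n → ∞. (Local convergence of the Jacobi polynomial iteration to the sinc-filtered fundamental solution of the Euler–Poisson–Darboux equation.) -/

import Mathlib

open MeasureTheory Matrix Filter Topology Real

noncomputable section

def latticeConv {d : ℕ} (ω x : (Fin d → ℤ) → ℝ) : (Fin d → ℤ) → ℝ :=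
  fun v => ∑' η : Fin d → ℤ, ω (v - η) * x η

def covQ (d : ℕ) (ω : (Fin d → ℤ) → ℝ) : Matrix (Fin d) (Fin d) ℝ :=
  Matrix.of fun i j => ∑' v : Fin d → ℤ, ω v * (v i : ℝ) * (v j : ℝ)

def ftOmega {d : ℕ} (ω : (Fin d → ℤ) → ℝ) (ξ : Fin d → ℝ) : ℂ :=
  ∑' v : Fin d → ℤ, (ω v : ℂ) * Complex.exp (Complex.I * ((∑ i, ξ i * (v i : ℝ) : ℝ) : ℂ))

def aCoef0 (d : ℕ) : ℝ := ((d : ℝ) + 4) / (2 * (2 + (d : ℝ)))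
def bCoef0 (d : ℕ) : ℝ := (d : ℝ) / (2 * (2 + (d : ℝ)))
def aCoef (d n : ℕ) : ℝ :=
  (2 * (n : ℝ) + (d : ℝ)/2 + 1) * (2 * (n : ℝ) + (d : ℝ)/2 + 2) / (2 * ((n : ℝ) + 1 + (d : ℝ)/2)^2)
def bCoef (d n : ℕ) : ℝ :=
  (d : ℝ)^2 * (2 * (n : ℝ) + (d : ℝ)/2 + 1) / (8 * ((n : ℝ) + 1 + (d : ℝ)/2)^2 * (2 * (n : ℝ) + (d : ℝ)/2))
def cCoef (d n : ℕ) : ℝ :=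
  (n : ℝ)^2 * (2 * (n : ℝ) + (d : ℝ)/2 + 2) / (((n : ℝ) + 1 + (d : ℝ)/2)^2 * (2 * (n : ℝ) + (d : ℝ)/2))

def besselJ (ν z : ℝ) : ℝ :=
  ∑' m : ℕ, ((-1 : ℝ)^m / ((m.factorial : ℝ) * Real.Gamma ((m : ℝ) + ν + 1))) * (z / 2) ^ (2 * (m : ℝ) + ν)

def jacobiP (α β : ℝ) (n : ℕ) (x : ℝ) : ℝ :=
  ∑ s ∈ Finset.range (n + 1),
    (Real.Gamma ((n : ℝ) + α + 1) / (Real.Gamma (α + (s : ℝ) + 1) * ((n - s).factorial : ℝ))) *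
    (Real.Gamma ((n : ℝ) + β + 1) / (Real.Gamma ((n : ℝ) + β - (s : ℝ) + 1) * (s.factorial : ℝ))) *
    ((x - 1) / 2) ^ s * ((x + 1) / 2) ^ (n - s)

def jacobiPi (α β : ℝ) (n : ℕ) (x : ℝ) : ℝ := jacobiP α β n x / jacobiP α β n 1

def pd {d : ℕ} (j : Fin d) (g : (Fin d → ℝ) → ℝ) : (Fin d → ℝ) → ℝ :=
  fun y => deriv (fun s => g (Function.update y j s)) (y j)

def pch (a : ℝ) (k : ℕ) : ℝ := ∏ j ∈ Finset.range k, (a + (j : ℝ))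

lemma pch_zero (a : ℝ) : pch a 0 = 1 := by simp [pch]

lemma pch_succ (a : ℝ) (k : ℕ) : pch a (k+1) = pch a k * (a + k) := by
  simp [pch, Finset.prod_range_succ]

lemma pch_succ' (a : ℝ) (k : ℕ) : pch a (k+1) = a * pch (a+1) k := by
  simp only [pch, Finset.prod_range_succ']
  rw [mul_comm]
  congr 1
  · simp
  · apply Finset.prod_congr rfl; intro j _; push_cast; ring

lemma pch_pos {a : ℝ} (ha : 0 < a) (k : ℕ) : 0 < pch a k :=
  Finset.prod_pos fun j _ => by positivity

lemma pch_neg_eq_zero (n k : ℕ) (h : n < k) : pch (-(n:ℝ)) k = 0 :=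
  Finset.prod_eq_zero (Finset.mem_range.2 h) (by simp)

def Hc (d n k : ℕ) : ℝ :=
  pch (-(n:ℝ)) k * pch ((n:ℝ) + (d:ℝ)/2 + 1) k / (pch ((d:ℝ)/2+1) k * (k.factorial : ℝ))

lemma Hc_eq_zero (d n k : ℕ) (h : n < k) : Hc d n k = 0 := by
  simp [Hc, pch_neg_eq_zero n k h]

lemma Hc_zero (d n : ℕ) : Hc d n 0 = 1 := by simp [Hc, pch_zero]

def Pp (d n : ℕ) : Polynomial ℝ :=
  ∑ k ∈ Finset.range (n+1), Polynomial.C (Hc d n k) * Polynomial.X ^ k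

lemma Pp_coeff (d n k : ℕ) : (Pp d n).coeff k = Hc d n k := by
  rw [Pp, Polynomial.finsetSum_coeff]
  simp only [Polynomial.coeff_C_mul, Polynomial.coeff_X_pow]
  by_cases h : k < n + 1
  · rw [Finset.sum_eq_single k]
    · simp
    · intro b _ hb; simp [hb.symm]
    · intro h'; exact absurd (Finset.mem_range.2 h) h'
  · rw [Hc_eq_zero d n k (by omega)]
    apply Finset.sum_eq_zero
    intro b hb
    have : b < n+1 := Finset.mem_range.1 hb
    have : k ≠ b := by omega
    simp [this]

lemma Hc_succ (d n k : ℕ) :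
    ((k:ℝ)+1) * ((k:ℝ) + (d:ℝ)/2 + 1) * Hc d n (k+1) =
      ((k:ℝ) - n) * ((k:ℝ) + n + (d:ℝ)/2 + 1) * Hc d n k := by
  have h1 : pch ((d:ℝ)/2+1) k ≠ 0 := (pch_pos (by positivity) k).ne'
  have h2 : (k.factorial : ℝ) ≠ 0 := by positivity
  have h3 : (d:ℝ)/2 + 1 + k ≠ 0 := by positivity
  have h4 : (k:ℝ) + 1 ≠ 0 := by positivity
  simp only [Hc, pch_succ, Nat.factorial_succ]
  push_cast
  generalize pch ((d:ℝ)/2+1) k = A at *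
  generalize pch (-(n:ℝ)) k = B at *
  generalize pch ((n:ℝ) + (d:ℝ)/2 + 1) k = C at *
  field_simp
  ring

lemma Hc_rec_zero (d : ℕ) (hd : 1 ≤ d) (n : ℕ) (hn : 1 ≤ n) : aCoef d n + bCoef d n - cCoef d n = 1 := by
  unfold aCoef bCoef cCoef
  have hd' : (0:ℝ) < d := by exact_mod_cast hd
  have h1 : (n:ℝ) + 1 + (d:ℝ)/2 ≠ 0 := by positivity
  have h2 : 2*(n:ℝ) + (d:ℝ)/2 ≠ 0 := by positivity
  field_simp
  ring

lemma Hc_rec (d : ℕ) (hd : 1 ≤ d) (n : ℕ) (k : ℕ) :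
    Hc d (n+2) (k+1) = (aCoef d (n+1) + bCoef d (n+1)) * Hc d (n+1) (k+1) - 2 * aCoef d (n+1) * Hc d (n+1) k
      - cCoef d (n+1) * Hc d n (k+1) := by
  have hd' : (0:ℝ) < d := by exact_mod_cast hd
  have h1 : pch ((d:ℝ)/2+1) k ≠ 0 := (pch_pos (by positivity) k).ne'
  have h2 : (k.factorial : ℝ) ≠ 0 := by positivity
  have h3 : (d:ℝ)/2 + 1 + k ≠ 0 := by positivity
  have h4 : (k:ℝ) + 1 ≠ 0 := by positivity
  have h5 : (n:ℝ) + 1 + (d:ℝ)/2 + 1 ≠ 0 := by positivity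
  have h6 : 2*((n:ℝ)+1) + (d:ℝ)/2 ≠ 0 := by positivity
  have h7 : (n:ℝ) + 1 ≠ 0 := by positivity
  have e1 : pch (-((n+2:ℕ):ℝ)) (k+1) = -((n:ℝ)+2) * pch (-((n:ℝ)+1)) k := by
    rw [pch_succ']; push_cast; congr 2 <;> ring
  have e2 : pch (-((n+1:ℕ):ℝ)) (k+1) = pch (-((n:ℝ)+1)) k * (-((n:ℝ)+1) + k) := by
    rw [pch_succ]; push_cast; rfl
  have e2' : pch (-((n+1:ℕ):ℝ)) k = pch (-((n:ℝ)+1)) k := by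
    push_cast; rfl
  have e3 : pch (-(n:ℝ)) (k+1) = pch (-((n:ℝ)+1)) k * (-((n:ℝ)+1) + k) * (k - n) / (-((n:ℝ)+1)) := by
    have := pch_succ' (-((n:ℝ)+1)) (k+1)
    rw [pch_succ, pch_succ] at this
    push_cast at this
    rw [show -((n:ℝ)+1)+1 = -n by ring] at this
    rw [eq_div_iff (by simpa using neg_ne_zero.2 h7), mul_comm, ← this]
    ring
  have f1 : pch (((n+2:ℕ):ℝ) + (d:ℝ)/2 + 1) (k+1) = pch ((n:ℝ) + 1 + (d:ℝ)/2 + 1) k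
      * ((n:ℝ) + 1 + (d:ℝ)/2 + 1 + k) * ((n:ℝ) + 1 + (d:ℝ)/2 + 1 + k + 1) / ((n:ℝ) + 1 + (d:ℝ)/2 + 1) := by
    have := pch_succ' ((n:ℝ) + 1 + (d:ℝ)/2 + 1) (k+1)
    rw [pch_succ, pch_succ] at this
    push_cast at this ⊢
    rw [eq_div_iff h5, mul_comm]
    rw [show (n:ℝ) + 2 + (d:ℝ)/2 + 1 = (n:ℝ) + 1 + (d:ℝ)/2 + 1 + 1 by ring, ← this]
    ring
  have f2 : pch (((n+1:ℕ):ℝ) + (d:ℝ)/2 + 1) (k+1) = pch ((n:ℝ) + 1 + (d:ℝ)/2 + 1) k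
      * ((n:ℝ) + 1 + (d:ℝ)/2 + 1 + k) := by
    rw [pch_succ]; push_cast; rfl
  have f2' : pch (((n+1:ℕ):ℝ) + (d:ℝ)/2 + 1) k = pch ((n:ℝ) + 1 + (d:ℝ)/2 + 1) k := by
    push_cast; rfl
  have f3 : pch ((n:ℝ) + (d:ℝ)/2 + 1) (k+1) = ((n:ℝ) + (d:ℝ)/2 + 1) * pch ((n:ℝ) + 1 + (d:ℝ)/2 + 1) k := by
    rw [pch_succ']; congr 2; ring
  simp only [Hc]
  rw [e1, e2, e2', e3, f1, f2, f2', f3, pch_succ, Nat.factorial_succ]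
  clear e1 e2 e2' e3 f1 f2 f2' f3
  unfold aCoef bCoef cCoef
  push_cast
  generalize pch ((d:ℝ)/2+1) k = A at *
  generalize pch (-((n:ℝ)+1)) k = B at *
  generalize pch ((n:ℝ) + 1 + (d:ℝ)/2 + 1) k = C at *
  generalize (k.factorial : ℝ) = F at *
  generalize (n:ℝ) = N at *
  generalize (k:ℝ) = K at *
  generalize (d:ℝ) = D at *
  obtain ⟨a, rfl⟩ : ∃ a, D = 2 * a := ⟨D/2, by ring⟩
  rw [show 2 * a / 2 = a by ring] at *
  obtain ⟨L, hL⟩ : ∃ L, L = N + 1 + 1 + a := ⟨_, rfl⟩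
  rw [show N + 1 + a + 1 = N + 1 + 1 + a by ring] at *
  rw [← hL] at h5 ⊢
  have hd2 : a ≠ 0 := by intro h; simp [h] at hd'
  field_simp
  subst hL
  ring

def Pv (d n : ℕ) (y : ℝ) : ℝ := (Pp d n).eval y

lemma Pv_zero (d : ℕ) (y : ℝ) : Pv d 0 y = 1 := by
  simp [Pv, Pp, Hc_zero]

lemma Pv_at_zero (d n : ℕ) : Pv d n 0 = 1 := by
  rw [Pv, ← Polynomial.coeff_zero_eq_eval_zero, Pp_coeff, Hc_zero]

lemma Pv_one (d : ℕ) (y : ℝ) : Pv d 1 y = aCoef0 d * (1 - 2*y) + bCoef0 d := by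
  simp only [Pv, Pp, Finset.sum_range_succ, Hc, pch]
  simp [aCoef0, bCoef0]
  field_simp
  ring

lemma Pv_rec (d : ℕ) (hd : 1 ≤ d) (n : ℕ) (y : ℝ) :
    Pv d (n+2) y = aCoef d (n+1) * ((1-2*y) * Pv d (n+1) y) + bCoef d (n+1) * Pv d (n+1) y
      - cCoef d (n+1) * Pv d n y := by
  have : Pp d (n+2) = Polynomial.C (aCoef d (n+1) + bCoef d (n+1)) * Pp d (n+1)
      - Polynomial.C (2 * aCoef d (n+1)) * (Polynomial.X * Pp d (n+1)) - Polynomial.C (cCoef d (n+1)) * Pp d n := by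
    ext k
    simp only [Polynomial.coeff_sub, Polynomial.coeff_C_mul, Pp_coeff]
    cases k with
    | zero =>
      simp only [Polynomial.coeff_X_mul_zero, Hc_zero]
      linarith [Hc_rec_zero d hd (n+1) (by omega)]
    | succ k =>
      simp only [Polynomial.coeff_X_mul, Pp_coeff]
      exact Hc_rec d hd n k
  simp only [Pv]
  rw [this]
  simp
  ring

lemma Pp_ode (d n : ℕ) (y : ℝ) :
    y * (1 - y) * (Pp d n).derivative.derivative.eval y
      + ((d:ℝ)/2 + 1 - ((d:ℝ)/2 + 2) * y) * (Pp d n).derivative.eval y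
      + (n:ℝ) * (n + (d:ℝ)/2 + 1) * (Pp d n).eval y = 0 := by
  have : Polynomial.X * (Pp d n).derivative.derivative - Polynomial.X * (Polynomial.X * (Pp d n).derivative.derivative)
     + Polynomial.C ((d:ℝ)/2+1) * (Pp d n).derivative - Polynomial.C ((d:ℝ)/2+2) * (Polynomial.X * (Pp d n).derivative)
     + Polynomial.C ((n:ℝ) * (n + (d:ℝ)/2 + 1)) * Pp d n = 0 := by
    ext k
    simp only [Polynomial.coeff_sub, Polynomial.coeff_add, Polynomial.coeff_C_mul, Polynomial.coeff_zero]
    cases k with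
    | zero =>
      simp only [Polynomial.coeff_X_mul_zero, Polynomial.coeff_derivative, Pp_coeff]
      have := Hc_succ d n 0
      push_cast at this ⊢
      linarith
    | succ k =>
      cases k with
      | zero =>
        simp only [Polynomial.coeff_X_mul, Polynomial.coeff_X_mul_zero, Polynomial.coeff_derivative, Pp_coeff]
        have := Hc_succ d n 1
        push_cast at this ⊢
        linarith
      | succ k =>
        simp only [Polynomial.coeff_X_mul, Polynomial.coeff_derivative, Pp_coeff]
        have := Hc_succ d n (k+2)
        push_cast at this ⊢
        linarith
  have h2 := congrArg (Polynomial.eval y) this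
  simp only [Polynomial.eval_add, Polynomial.eval_sub, Polynomial.eval_mul, Polynomial.eval_X, Polynomial.eval_C,
    Polynomial.eval_zero] at h2
  linarith

def pT (d n : ℕ) (t : ℝ) : ℝ := (Pp d n).eval (sin t ^ 2)
def qT (d n : ℕ) (t : ℝ) : ℝ := 2 * sin t * cos t * (Pp d n).derivative.eval (sin t ^ 2)

lemma hasDerivAt_pT (d n : ℕ) (t : ℝ) : HasDerivAt (pT d n) (qT d n t) t := by
  have h1 : HasDerivAt (fun t => sin t ^ 2) (2 * sin t * cos t) t := by
    have := (hasDerivAt_sin t).pow 2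
    refine this.congr_deriv ?_
    norm_num
  have h2 := ((Pp d n).hasDerivAt (sin t ^ 2)).comp t h1
  refine h2.congr_deriv ?_
  unfold qT; ring

lemma hasDerivAt_qT (d n : ℕ) (t : ℝ) : HasDerivAt (qT d n)
    (2 * (cos t ^ 2 - sin t ^ 2) * (Pp d n).derivative.eval (sin t ^ 2)
      + 4 * sin t ^ 2 * cos t ^ 2 * (Pp d n).derivative.derivative.eval (sin t ^ 2)) t := by
  have h1 : HasDerivAt (fun t => sin t ^ 2) (2 * sin t * cos t) t := by
    have := (hasDerivAt_sin t).pow 2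
    refine this.congr_deriv ?_
    norm_num
  have h2 := ((Pp d n).derivative.hasDerivAt (sin t ^ 2)).comp t h1
  have h3 := (((hasDerivAt_sin t).const_mul 2).mul (hasDerivAt_cos t)).mul h2
  refine h3.congr_deriv ?_
  simp only [Function.comp, Pi.mul_apply]
  ring

lemma qT_ode (d n : ℕ) (t : ℝ) (hs : sin t ≠ 0) (hc : cos t ≠ 0) :
    HasDerivAt (qT d n) (- ((d+1) * (cos t / sin t) - sin t / cos t) * qT d n t
      - 4 * ((n:ℝ) * (n + (d:ℝ)/2 + 1)) * pT d n t) t := by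
  refine (hasDerivAt_qT d n t).congr_deriv ?_
  have h := Pp_ode d n (sin t ^ 2)
  have hc2 : cos t ^ 2 = 1 - sin t ^ 2 := by rw [cos_sq']
  unfold qT pT
  have e1 : (-((d+1) * (cos t / sin t) - sin t / cos t)) * (2 * sin t * cos t * (Pp d n).derivative.eval (sin t ^ 2))
     = (-((d+1) * cos t ^ 2 - sin t ^ 2)) * (2 * (Pp d n).derivative.eval (sin t ^ 2)) := by
    field_simp
  rw [e1, hc2]
  linear_combination 4 * h

lemma E0_le (d n : ℕ) (hn : 1 ≤ n) (t : ℝ) (h0 : 0 ≤ t) (h1 : t ≤ π / 4) :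
    pT d n t ^ 2 + qT d n t ^ 2 / (4 * ((n:ℝ) * (n + (d:ℝ)/2 + 1))) ≤ 1 := by
  have hn' : (0:ℝ) < n := by exact_mod_cast hn
  set L : ℝ := 4 * ((n:ℝ) * (n + (d:ℝ)/2 + 1)) with hL
  have hLp : 0 < L := by positivity
  have hanti : AntitoneOn (fun t => pT d n t ^ 2 + qT d n t ^ 2 / L) (Set.Icc 0 (π/4)) := by
    have hcont : ∀ t, DifferentiableAt ℝ (fun t => pT d n t ^ 2 + qT d n t ^ 2 / L) t := fun t =>
      ((hasDerivAt_pT d n t).differentiableAt.pow 2).add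
        (((hasDerivAt_qT d n t).differentiableAt.pow 2).div_const L)
    apply antitoneOn_of_deriv_nonpos (convex_Icc _ _)
    · exact fun t _ => (hcont t).continuousAt.continuousWithinAt
    · exact fun t _ => (hcont t).differentiableWithinAt
    · intro t ht
      rw [interior_Icc] at ht
      have hpi := pi_pos
      have hs : 0 < sin t := sin_pos_of_pos_of_lt_pi ht.1 (by linarith [ht.2])
      have hc : 0 < cos t := cos_pos_of_mem_Ioo ⟨by linarith [ht.1], by linarith [ht.2]⟩
      have hsc : sin t ≤ cos t := by
        rw [← cos_pi_div_two_sub]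
        apply cos_le_cos_of_nonneg_of_le_pi <;> linarith [ht.1, ht.2]
      have hd := (((hasDerivAt_pT d n t).pow 2).add (((qT_ode d n t hs.ne' hc.ne').pow 2).div_const L))
      have hd' : HasDerivAt (fun t => pT d n t ^ 2 + qT d n t ^ 2 / L)
          (-(2 * qT d n t ^ 2 * ((d+1) * (cos t / sin t) - sin t / cos t) / L)) t := by
        refine hd.congr_deriv ?_
        rw [← hL]
        simp only [Nat.cast_ofNat, Nat.reduceSub, pow_one]
        generalize (d+1) * (cos t / sin t) - sin t / cos t = z
        field_simp
        ring
      rw [hd'.deriv]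
      have a1 : 1 ≤ cos t / sin t := by rwa [le_div_iff₀ hs, one_mul]
      have a2 : sin t / cos t ≤ 1 := by rwa [div_le_iff₀ hc, one_mul]
      have a3 : 0 ≤ (d:ℝ) * (cos t / sin t) := by positivity
      have a4 : 0 ≤ (d+1) * (cos t / sin t) - sin t / cos t := by nlinarith
      rw [neg_nonpos]
      positivity
  have := hanti ⟨le_refl 0, by positivity⟩ ⟨h0, h1⟩ h0
  simp only at this
  refine this.trans ?_
  have : pT d n 0 = 1 := by
    have := Pv_at_zero d n
    simpa [pT, Pv] using this
  simp [this, qT]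

lemma sonin_deriv {W p v φ : ℝ → ℝ} {l f t : ℝ} (hW : HasDerivAt W (2 * l * W t) t)
    (hp : HasDerivAt p (v t - l * p t) t) (hv : HasDerivAt v (-(φ t * p t) - l * v t) t)
    (hφ : HasDerivAt φ f t) (h0 : φ t ≠ 0) :
    HasDerivAt (fun t => W t * (p t ^ 2 + v t ^ 2 / φ t)) (-(W t * v t ^ 2 * f / φ t ^ 2)) t := by
  refine (hW.mul ((hp.pow 2).add ((hv.pow 2).div hφ h0))).congr_deriv ?_
  simp only [Nat.cast_ofNat, Nat.reduceSub, pow_one, Pi.add_apply, Pi.pow_apply, Pi.div_apply]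
  field_simp
  ring

def lT (d : ℕ) (t : ℝ) : ℝ := ((d+1) * (cos t / sin t) - sin t / cos t) / 2
def vT (d n : ℕ) (t : ℝ) : ℝ := lT d t * pT d n t + qT d n t
def phiT (d n : ℕ) (t : ℝ) : ℝ := 4 * ((n:ℝ) * (n + (d:ℝ)/2 + 1)) + ((d:ℝ)+2)^2/4
  + (1 - (d:ℝ)^2) / 4 / sin t ^ 2 + 1 / 4 / cos t ^ 2
def WT (d : ℕ) (t : ℝ) : ℝ := sin t ^ (d+1) * cos t

lemma hasDerivAt_lT (d : ℕ) (t : ℝ) (hs : sin t ≠ 0) (hc : cos t ≠ 0) :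
    HasDerivAt (lT d) ((-(d+1) / sin t ^ 2 - 1 / cos t ^ 2) / 2) t := by
  have h1 := (((hasDerivAt_cos t).div (hasDerivAt_sin t) hs).const_mul ((d:ℝ)+1)).sub
    ((hasDerivAt_sin t).div (hasDerivAt_cos t) hc)
  refine (h1.div_const 2).congr_deriv ?_
  have hc2 : cos t ^ 2 = 1 - sin t ^ 2 := by rw [cos_sq']
  have e1 : -sin t * sin t - cos t * cos t = -1 := by nlinarith
  have e2 : cos t * cos t - sin t * -sin t = 1 := by nlinarith
  rw [e1, e2]; ring

lemma hasDerivAt_vT (d n : ℕ) (t : ℝ) (hs : sin t ≠ 0) (hc : cos t ≠ 0) :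
    HasDerivAt (vT d n) (-(phiT d n t * pT d n t) - lT d t * vT d n t) t := by
  refine (((hasDerivAt_lT d t hs hc).mul (hasDerivAt_pT d n t)).add (qT_ode d n t hs hc)).congr_deriv ?_
  have key : phiT d n t = 4 * ((n:ℝ) * (n + (d:ℝ)/2 + 1)) - lT d t ^ 2
      - ((-(d+1) / sin t ^ 2 - 1 / cos t ^ 2) / 2) := by
    unfold phiT lT
    have hc2 : cos t ^ 2 = 1 - sin t ^ 2 := by rw [cos_sq']
    have hsq : (((d:ℝ)+1) * (cos t / sin t) - sin t / cos t)^2 = ((d:ℝ)+1)^2 * (1 / sin t ^ 2 - 1)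
        - 2 * (d+1) + (1 / cos t ^ 2 - 1) := by
      have e1 : (cos t / sin t)^2 = 1 / sin t ^ 2 - 1 := by
        rw [div_pow, hc2]; field_simp
      have e2 : (sin t / cos t)^2 = 1 / cos t ^ 2 - 1 := by
        have : sin t ^ 2 = 1 - cos t ^ 2 := by rw [sin_sq]
        rw [div_pow, this]; field_simp
      have e3 : (cos t / sin t) * (sin t / cos t) = 1 := by field_simp
      linear_combination ((d:ℝ)+1)^2 * e1 + e2 - 2 * (d+1) * e3
    rw [div_pow, hsq]
    field_simp
    ring
  rw [key]
  unfold vT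
  have : ((d+1) * (cos t / sin t) - sin t / cos t) = 2 * lT d t := by unfold lT; ring
  rw [this]
  ring

lemma hasDerivAt_phiT (d n : ℕ) (t : ℝ) (hs : sin t ≠ 0) (hc : cos t ≠ 0) :
    HasDerivAt (phiT d n) (((d:ℝ)^2 - 1)/2 * cos t / sin t ^ 3 + sin t / (2 * cos t ^ 3)) t := by
  have h1 := (((hasDerivAt_const t ((1 - (d:ℝ)^2) / 4)).div ((hasDerivAt_sin t).pow 2) (pow_ne_zero 2 hs)).const_add
    (4 * ((n:ℝ) * (n + (d:ℝ)/2 + 1)) + ((d:ℝ)+2)^2/4)).add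
    ((hasDerivAt_const t ((1:ℝ) / 4)).div ((hasDerivAt_cos t).pow 2) (pow_ne_zero 2 hc))
  refine h1.congr_deriv ?_
  simp only [Nat.cast_ofNat, Nat.reduceSub, pow_one, Pi.pow_apply]
  field_simp
  ring

lemma hasDerivAt_WT (d : ℕ) (t : ℝ) (hs : sin t ≠ 0) (hc : cos t ≠ 0) :
    HasDerivAt (WT d) (2 * lT d t * WT d t) t := by
  refine (((hasDerivAt_sin t).pow (d+1)).mul (hasDerivAt_cos t)).congr_deriv ?_
  unfold lT WT
  simp only [Nat.cast_add, Nat.cast_one, Nat.add_sub_cancel, Pi.pow_apply]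
  field_simp
  ring

lemma E1_le (d n : ℕ) (hd : 1 ≤ d) (t0 t : ℝ) (h0 : 0 < t0) (h01 : t0 ≤ t) (h1 : t < π / 2)
    (hφ : ∀ τ ∈ Set.Icc t0 t, 0 < phiT d n τ) :
    WT d t * pT d n t ^ 2 ≤ WT d t0 * (pT d n t0 ^ 2 + vT d n t0 ^ 2 / phiT d n t0) := by
  have hd' : (1:ℝ) ≤ d := by exact_mod_cast hd
  have hs : ∀ τ ∈ Set.Icc t0 t, 0 < sin τ := fun τ hτ =>
    sin_pos_of_pos_of_lt_pi (by linarith [hτ.1]) (by linarith [hτ.2, pi_pos])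
  have hc : ∀ τ ∈ Set.Icc t0 t, 0 < cos τ := fun τ hτ =>
    cos_pos_of_mem_Ioo ⟨by linarith [hτ.1, pi_pos], by linarith [hτ.2, pi_pos]⟩
  have hder : ∀ τ ∈ Set.Icc t0 t, HasDerivAt (fun t => WT d t * (pT d n t ^ 2 + vT d n t ^ 2 / phiT d n t)) _ τ :=
    fun τ hτ => sonin_deriv (hasDerivAt_WT d τ (hs τ hτ).ne' (hc τ hτ).ne')
      ((hasDerivAt_pT d n τ).congr_deriv (by unfold vT; ring))
      (hasDerivAt_vT d n τ (hs τ hτ).ne' (hc τ hτ).ne') (hasDerivAt_phiT d n τ (hs τ hτ).ne' (hc τ hτ).ne')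
      (hφ τ hτ).ne'
  have hanti : AntitoneOn (fun t => WT d t * (pT d n t ^ 2 + vT d n t ^ 2 / phiT d n t)) (Set.Icc t0 t) := by
    apply antitoneOn_of_deriv_nonpos (convex_Icc _ _)
    · exact fun τ hτ => (hder τ hτ).continuousAt.continuousWithinAt
    · exact fun τ hτ => (hder τ (interior_subset hτ)).differentiableAt.differentiableWithinAt
    · intro τ hτ
      have hτ' := interior_subset hτ
      rw [(hder τ hτ').deriv, neg_nonpos]
      have a := hs τ hτ'
      have b := hc τ hτ'
      have : 0 ≤ (d:ℝ)^2 - 1 := by nlinarith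
      unfold WT
      positivity
  have h := hanti ⟨le_refl _, h01⟩ ⟨h01, le_refl _⟩ h01
  refine le_trans ?_ h
  have a := hs t ⟨h01, le_refl _⟩
  have b := hc t ⟨h01, le_refl _⟩
  have e := hφ t ⟨h01, le_refl _⟩
  simp only
  unfold WT
  gcongr
  have : 0 ≤ vT d n t ^ 2 / phiT d n t := by positivity
  linarith

set_option maxHeartbeats 1000000 in
lemma decay_T (d n : ℕ) (hd : 1 ≤ d) (hn : 4 * d ≤ n) (t : ℝ) (h0 : 0 ≤ t) (h1 : t < π/2) :
    (n * sin t)^(d+1) * cos t * pT d n t ^ 2 ≤ 20 * (d:ℝ)^(d+1) := by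
  have hd' : (1:ℝ) ≤ d := by exact_mod_cast hd
  have hn' : 4 * (d:ℝ) ≤ n := by exact_mod_cast hn
  have hn0 : (0:ℝ) < n := by linarith
  have hpi := pi_gt_three
  have hpi4 := pi_lt_four
  have hs : 0 ≤ sin t := sin_nonneg_of_nonneg_of_le_pi h0 (by linarith)
  have hc : 0 ≤ cos t := cos_nonneg_of_mem_Icc ⟨by linarith, by linarith⟩
  set t0 : ℝ := d / n with ht0
  have ht0p : 0 < t0 := by positivity
  have ht04 : t0 ≤ 1/4 := by rw [ht0, div_le_iff₀ hn0]; linarith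
  have hnt0 : n * t0 = d := by rw [ht0]; field_simp
  by_cases htt : t ≤ t0
  · have e0 := E0_le d n (by omega) t h0 (by linarith)
    have : 0 ≤ qT d n t ^ 2 / (4 * ((n:ℝ) * (n + (d:ℝ)/2 + 1))) := by positivity
    have hp : pT d n t ^ 2 ≤ 1 := by linarith
    have hst : n * sin t ≤ d := by
      rw [← hnt0]; gcongr; exact (sin_le h0).trans htt
    calc (n * sin t)^(d+1) * cos t * pT d n t ^ 2 ≤ (d:ℝ)^(d+1) * 1 * 1 := by
          gcongr; exact cos_le_one t
      _ ≤ 20 * (d:ℝ)^(d+1) := by nlinarith [show 0 < (d:ℝ)^(d+1) by positivity]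
  · push Not at htt
    have hsl : ∀ τ, t0 ≤ τ → τ ≤ t → (d:ℝ)/ (2 * n) ≤ sin τ := by
      intro τ h2 h3
      have := mul_le_sin (x := τ) (by linarith) (by linarith)
      have h5 : 2 / π ≥ 1/2 := by rw [ge_iff_le, div_le_div_iff₀] <;> linarith
      have h6 : (d:ℝ)/(2*n) = 1/2 * t0 := by rw [ht0]; field_simp
      rw [h6]
      nlinarith
    have hφ : ∀ τ ∈ Set.Icc t0 t, 3 * (n:ℝ)^2 ≤ phiT d n τ := by
      intro τ hτ
      have h5 := hsl τ hτ.1 hτ.2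
      have h6 : (0:ℝ) < d/(2*n) := by positivity
      have h7 : 0 < sin τ := lt_of_lt_of_le h6 h5
      have h8 : (d:ℝ)^2/4/sin τ ^2 ≤ n^2 := by
        rw [div_le_iff₀ (by positivity)]
        calc (d:ℝ)^2/4 = n^2 * (d/(2*n))^2 := by field_simp; norm_num
          _ ≤ _ := by gcongr
      have h9 : 0 ≤ 1/4/cos τ ^ 2 := by positivity
      have h10 : 0 ≤ (1:ℝ)/4/sin τ ^ 2 := by positivity
      have h11 : phiT d n τ = 4 * ((n:ℝ) * (n + (d:ℝ)/2 + 1)) + ((d:ℝ)+2)^2/4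
         + (1/4/sin τ^2 - (d:ℝ)^2/4/sin τ^2) + 1/4/cos τ ^ 2 := by unfold phiT; ring
      rw [h11]
      nlinarith [mul_pos hn0 (by linarith : (0:ℝ) < d)]
    have hn2 : 0 < 3 * (n:ℝ)^2 := by positivity
    have hE := E1_le d n hd t0 t ht0p htt.le h1 (fun τ hτ => lt_of_lt_of_le hn2 (hφ τ hτ))
    have hs0 := hsl t0 le_rfl htt.le
    have hs0p : 0 < sin t0 := lt_of_lt_of_le (by positivity) hs0
    have hc0p : 0 < cos t0 := cos_pos_of_mem_Ioo ⟨by linarith, by linarith⟩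
    have hsc : sin t0 ≤ cos t0 := by
      rw [← cos_pi_div_two_sub]
      apply cos_le_cos_of_nonneg_of_le_pi <;> linarith
    have e0 := E0_le d n (by omega) t0 ht0p.le (by linarith)
    set L : ℝ := 4 * ((n:ℝ) * (n + (d:ℝ)/2 + 1)) with hL
    have hLp : 0 < L := by positivity
    have hL6 : L ≤ 10 * n^2 := by rw [hL]; nlinarith
    have hp : pT d n t0 ^ 2 ≤ 1 := by
      have : 0 ≤ qT d n t0 ^ 2 / L := by positivity
      linarith
    have hq : qT d n t0 ^ 2 ≤ L := by
      have : qT d n t0 ^ 2 / L ≤ 1 := by nlinarith [sq_nonneg (pT d n t0)]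
      rwa [div_le_one hLp] at this
    have hl0 : 0 ≤ lT d t0 := by
      unfold lT
      have a1 : 1 ≤ cos t0 / sin t0 := by rwa [le_div_iff₀ hs0p, one_mul]
      have a2 : sin t0 / cos t0 ≤ 1 := by rwa [div_le_iff₀ hc0p, one_mul]
      nlinarith
    have hl1 : lT d t0 ≤ 2 * n := by
      unfold lT
      have a2 : 0 ≤ sin t0 / cos t0 := by positivity
      have a3 : cos t0 / sin t0 ≤ 2 * n / d := by
        rw [div_le_div_iff₀ hs0p (by linarith)]
        have : (d:ℝ) ≤ 2 * n * sin t0 := by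
          rw [div_le_iff₀ (by positivity)] at hs0; linarith
        nlinarith [cos_le_one t0]
      have a4 : ((d:ℝ)+1) * (cos t0 / sin t0) ≤ (2 * d) * (2 * n / d) := by
        gcongr; linarith
      have a5 : (2 * (d:ℝ)) * (2 * n / d) = 4 * n := by field_simp; norm_num
      linarith
    have hv : vT d n t0 ^ 2 ≤ 28 * n^2 := by
      unfold vT
      have b1 : (lT d t0 * pT d n t0 + qT d n t0)^2 ≤ 2 * (lT d t0 ^2 * pT d n t0 ^2) + 2 * qT d n t0 ^2 := by
        nlinarith [sq_nonneg (lT d t0 * pT d n t0 - qT d n t0)]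
      have b2 : lT d t0 ^2 * pT d n t0 ^2 ≤ (2*n)^2 * 1 := by gcongr
      nlinarith
    have hvφ : vT d n t0 ^ 2 / phiT d n t0 ≤ 19 := by
      have := hφ t0 ⟨le_rfl, htt.le⟩
      rw [div_le_iff₀ (by linarith)]
      nlinarith
    have hW : (n:ℝ)^(d+1) * WT d t0 ≤ (d:ℝ)^(d+1) := by
      unfold WT
      calc (n:ℝ)^(d+1) * (sin t0 ^(d+1) * cos t0) = (n * sin t0)^(d+1) * cos t0 := by rw [mul_pow]; ring
        _ ≤ (d:ℝ)^(d+1) * 1 := by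
          gcongr
          · rw [← hnt0]; gcongr; exact sin_le ht0p.le
          · exact cos_le_one _
        _ = _ := by ring
    calc (n * sin t)^(d+1) * cos t * pT d n t ^ 2 = (n:ℝ)^(d+1) * (WT d t * pT d n t ^ 2) := by
          unfold WT; rw [mul_pow]; ring
      _ ≤ (n:ℝ)^(d+1) * (WT d t0 * (pT d n t0 ^ 2 + vT d n t0 ^ 2 / phiT d n t0)) := by gcongr
      _ = (n:ℝ)^(d+1) * WT d t0 * (pT d n t0 ^ 2 + vT d n t0 ^ 2 / phiT d n t0) := by ring
      _ ≤ (d:ℝ)^(d+1) * 20 := by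
          have : 0 ≤ vT d n t0 ^ 2 / phiT d n t0 :=
            div_nonneg (sq_nonneg _) (by linarith [hφ t0 ⟨le_rfl, htt.le⟩])
          gcongr
          linarith
      _ = _ := by ring

lemma decay_y (d : ℕ) (hd : 1 ≤ d) (δ : ℝ) (hδ : 0 < δ) : ∃ C : ℝ, ∀ n : ℕ, 4 * d ≤ n →
    ∀ y : ℝ, 0 ≤ y → y ≤ 1 - δ → (1 + n * √y)^(d+1) * Pv d n y ^ 2 ≤ C := by
  refine ⟨2^(d+1) * (1 + 20 * (d:ℝ)^(d+1) / √δ), fun n hn y hy0 hy1 => ?_⟩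
  have hd' : (1:ℝ) ≤ d := by exact_mod_cast hd
  have hn' : 4 * (d:ℝ) ≤ n := by exact_mod_cast hn
  have hn0 : (0:ℝ) < n := by linarith
  have hpi := pi_gt_three
  set t := arcsin √y with ht
  have hsy0 : 0 ≤ √y := sqrt_nonneg y
  have hsy1 : √y < 1 := by rw [sqrt_lt' one_pos]; linarith
  have hst : sin t = √y := sin_arcsin (by linarith) hsy1.le
  have ht0 : 0 ≤ t := arcsin_nonneg.2 hsy0
  have ht1 : t < π/2 := arcsin_lt_pi_div_two.2 hsy1
  have hct : √δ ≤ cos t := by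
    rw [ht, cos_arcsin]
    apply sqrt_le_sqrt
    rw [sq_sqrt hy0]; linarith
  have hp : pT d n t = Pv d n y := by
    unfold pT Pv; rw [hst, sq_sqrt hy0]
  have hsδ : 0 < √δ := sqrt_pos.2 hδ
  by_cases h : n * √y ≤ 1
  · have ht4 : t ≤ π/4 := by
      have h1 : √y ≤ 1/4 := by
        have : √y ≤ 1 / n := by rw [le_div_iff₀ hn0]; linarith
        refine this.trans ?_
        apply one_div_le_one_div_of_le <;> linarith
      rw [ht]
      have h2 := mul_le_sin ht0 ht1.le
      rw [hst] at h2
      rw [div_mul_eq_mul_div, div_le_iff₀ pi_pos] at h2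
      have : t = arcsin √y := ht
      rw [← this]
      nlinarith
    have e0 := E0_le d n (by omega) t ht0 ht4
    have h3 : 0 ≤ qT d n t ^ 2 / (4 * ((n:ℝ) * (n + (d:ℝ)/2 + 1))) := by positivity
    have h4 : Pv d n y ^ 2 ≤ 1 := by rw [← hp]; linarith
    calc (1 + n * √y)^(d+1) * Pv d n y ^ 2 ≤ (2:ℝ)^(d+1) * 1 := by
          gcongr; linarith
      _ ≤ _ := by
          gcongr
          have : 0 ≤ 20 * (d:ℝ)^(d+1) / √δ := by positivity
          linarith
  · push Not at h
    have h5 := decay_T d n hd hn t ht0 ht1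
    rw [hst, hp] at h5
    have h6 : (n * √y)^(d+1) * Pv d n y ^ 2 ≤ 20 * (d:ℝ)^(d+1) / √δ := by
      rw [le_div_iff₀ hsδ]
      refine le_trans ?_ h5
      have : 0 ≤ (n * √y)^(d+1) * Pv d n y ^ 2 := by positivity
      nlinarith
    calc (1 + n * √y)^(d+1) * Pv d n y ^ 2 ≤ (2 * (n * √y))^(d+1) * Pv d n y ^ 2 := by
          gcongr; linarith
      _ = 2^(d+1) * ((n * √y)^(d+1) * Pv d n y ^ 2) := by rw [mul_pow]; ring
      _ ≤ _ := by gcongr; linarith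

def Gs (d : ℕ) (r : ℝ) : ℝ := ∑' k : ℕ, (-r)^k / (pch ((d:ℝ)/2+1) k * (k.factorial : ℝ))

lemma one_le_pch (d k : ℕ) : 1 ≤ pch ((d:ℝ)/2+1) k := by
  induction k with
  | zero => simp [pch_zero]
  | succ k ih =>
    rw [pch_succ]
    have : (0:ℝ) ≤ (d:ℝ)/2 + k := by positivity
    nlinarith

lemma Gs_term_bound (d k : ℕ) (r R : ℝ) (h : |r| ≤ R) :
    ‖(-r)^k / (pch ((d:ℝ)/2+1) k * (k.factorial : ℝ))‖ ≤ R^k / (k.factorial : ℝ) := by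
  have h1 := one_le_pch d k
  have h2 : (0:ℝ) < k.factorial := by positivity
  rw [norm_div, norm_pow, norm_neg, Real.norm_eq_abs, Real.norm_eq_abs,
    abs_of_pos (by positivity : 0 < pch ((d:ℝ)/2+1) k * (k.factorial : ℝ))]
  have : 0 ≤ R := (abs_nonneg r).trans h
  gcongr
  nlinarith

lemma Gs_summable (d : ℕ) (r : ℝ) : Summable fun k : ℕ => (-r)^k / (pch ((d:ℝ)/2+1) k * (k.factorial : ℝ)) :=
  Summable.of_norm_bounded (Real.summable_pow_div_factorial |r|) fun k => Gs_term_bound d k r |r| le_rfl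

lemma Gs_continuous (d : ℕ) : Continuous (Gs d) := by
  rw [continuous_iff_continuousAt]
  intro r
  have h : ContinuousOn (Gs d) (Set.Icc (-(|r|+1)) (|r|+1)) := by
    apply continuousOn_tsum (u := fun k : ℕ => (|r|+1)^k / (k.factorial : ℝ))
    · intro k; fun_prop
    · exact Real.summable_pow_div_factorial _
    · intro k x hx
      exact Gs_term_bound d k x _ (abs_le.2 hx)
  apply h.continuousAt
  apply Icc_mem_nhds
  · linarith [neg_abs_le r]
  · linarith [le_abs_self r]

lemma Pv_eq_tsum (d n : ℕ) (y : ℝ) : Pv d n y = ∑' k : ℕ, Hc d n k * y^k := by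
  rw [tsum_eq_sum (s := Finset.range (n+1))]
  · simp [Pv, Pp, Polynomial.eval_finsetSum]
  · intro k hk
    rw [Finset.mem_range] at hk
    rw [Hc_eq_zero d n k (by omega), zero_mul]

lemma Hc_term (d n k : ℕ) (y : ℝ) : Hc d n k * y^k =
    (∏ j ∈ Finset.range k, ((-(n:ℝ) + j) * ((n:ℝ) + (d:ℝ)/2 + 1 + j) * y)) /
      (pch ((d:ℝ)/2+1) k * (k.factorial : ℝ)) := by
  rw [Finset.prod_mul_distrib, Finset.prod_mul_distrib]
  simp [Hc, pch]
  ring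

lemma Hc_term_bound (d n k : ℕ) (hn : 1 ≤ n) (y R : ℝ) (hy : 0 ≤ y) (hR : ((d:ℝ)/2+2) * ((n:ℝ)^2 * y) ≤ R) :
    ‖Hc d n k * y^k‖ ≤ R^k / (k.factorial : ℝ) := by
  have hn' : (1:ℝ) ≤ n := by exact_mod_cast hn
  have hR0 : 0 ≤ R := le_trans (by positivity) hR
  by_cases hk : n < k
  · rw [Hc_eq_zero d n k hk]; simp; positivity
  · push Not at hk
    have h1 := one_le_pch d k
    have h2 : (0:ℝ) < k.factorial := by positivity
    rw [Hc_term, norm_div, norm_prod, Real.norm_eq_abs (_ * _),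
      abs_of_pos (by positivity : 0 < pch ((d:ℝ)/2+1) k * (k.factorial : ℝ))]
    have h3 : ∏ j ∈ Finset.range k, ‖(-(n:ℝ) + j) * ((n:ℝ) + (d:ℝ)/2 + 1 + j) * y‖ ≤ R^k := by
      rw [← Finset.card_range k, ← Finset.prod_const, Finset.card_range]
      apply Finset.prod_le_prod
      · intro j _; positivity
      · intro j hj
        have hj' : (j:ℝ) ≤ n := by
          have := Finset.mem_range.1 hj
          exact_mod_cast (by omega : j ≤ n)
        have hj0 : (0:ℝ) ≤ j := by positivity
        rw [norm_mul, norm_mul, Real.norm_eq_abs, Real.norm_eq_abs, Real.norm_eq_abs, abs_of_nonneg hy,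
          abs_of_nonpos (by linarith : -(n:ℝ) + j ≤ 0),
          abs_of_nonneg (by positivity : (0:ℝ) ≤ (n:ℝ) + (d:ℝ)/2 + 1 + j)]
        refine le_trans ?_ hR
        rw [← mul_assoc]
        apply mul_le_mul_of_nonneg_right _ hy
        have hd0 : (0:ℝ) ≤ (d:ℝ)/2 := by positivity
        nlinarith [mul_nonneg hj0 hd0, mul_nonneg hd0 (by linarith : (0:ℝ) ≤ (n:ℝ)-1),
          mul_nonneg (mul_nonneg hd0 (by linarith : (0:ℝ) ≤ (n:ℝ)-1)) (by linarith : (0:ℝ) ≤ (n:ℝ))]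
    gcongr
    nlinarith

lemma mehler_heine (d : ℕ) (y : ℕ → ℝ) (r : ℝ) (hy : ∀ n, 0 ≤ y n)
    (h : Tendsto (fun n : ℕ => (n:ℝ)^2 * y n) atTop (𝓝 r)) :
    Tendsto (fun n => Pv d n (y n)) atTop (𝓝 (Gs d r)) := by
  simp only [Pv_eq_tsum]
  unfold Gs
  apply tendsto_tsum_of_dominated_convergence
    (bound := fun k : ℕ => (((d:ℝ)/2+2) * (r+1))^k / (k.factorial : ℝ))
  · exact Real.summable_pow_div_factorial _
  · intro k
    simp only [Hc_term]
    apply Tendsto.div_const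
    have : (-r)^k = ∏ j ∈ Finset.range k, (-r) := by simp
    rw [this]
    apply tendsto_finsetProd
    intro j _
    have h1 : Tendsto (fun n : ℕ => (-1 + (j:ℝ) / n) * (1 + ((d:ℝ)/2 + 1 + j) / n) * ((n:ℝ)^2 * y n)) atTop
        (𝓝 ((-1 + 0) * (1 + 0) * r)) := by
      refine Tendsto.mul (Tendsto.mul (tendsto_const_nhds.add ?_) (tendsto_const_nhds.add ?_)) h
      · exact tendsto_const_div_atTop_nhds_zero_nat _
      · exact tendsto_const_div_atTop_nhds_zero_nat _
    have e : (-1 + 0) * (1 + 0) * r = -r := by ring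
    rw [e] at h1
    refine h1.congr' ?_
    filter_upwards [eventually_ge_atTop 1] with n hn
    have hn' : (n:ℝ) ≠ 0 := by positivity
    field_simp
    ring
  · have h2 := h.eventually (eventually_le_nhds (show r < r + 1 by linarith))
    filter_upwards [h2, eventually_ge_atTop 1] with n hn hn1
    intro k
    exact Hc_term_bound d n k hn1 (y n) _ (hy n) (by gcongr)

def Bs (d : ℕ) : Set (Fin d → ℝ) := {w | ∑ i, w i ^ 2 ≤ 1}

lemma Bs_closed (d : ℕ) : IsClosed (Bs d) :=
  isClosed_le (by fun_prop) continuous_const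

lemma Bs_meas (d : ℕ) : MeasurableSet (Bs d) := (Bs_closed d).measurableSet

lemma Bs_coord {d : ℕ} {w : Fin d → ℝ} (hw : w ∈ Bs d) (i : Fin d) : |w i| ≤ 1 := by
  have h1 : w i ^ 2 ≤ ∑ i, w i ^ 2 := Finset.single_le_sum (fun j _ => sq_nonneg (w j)) (Finset.mem_univ i)
  have h2 : w i ^ 2 ≤ 1 := h1.trans hw
  exact abs_le_one_iff_mul_self_le_one.2 (by nlinarith)

lemma Bs_compact (d : ℕ) : IsCompact (Bs d) := by
  apply (isCompact_Icc (a := fun _ : Fin d => (-1:ℝ)) (b := fun _ => 1)).of_isClosed_subset (Bs_closed d)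
  intro w hw
  exact ⟨fun i => (abs_le.1 (Bs_coord hw i)).1, fun i => (abs_le.1 (Bs_coord hw i)).2⟩

lemma Bs_finite (d : ℕ) : volume (Bs d) < ⊤ := (Bs_compact d).measure_lt_top

lemma ball_rotate (d : ℕ) (i0 : Fin d) (ζ : Fin d → ℝ) :
    ∫ w in Bs d, cos (∑ i, ζ i * w i) = ∫ w in Bs d, cos (√(∑ i, ζ i ^ 2) * w i0) := by
  have hmp := PiLp.volume_preserving_ofLp (Fin d)
  have hemb : MeasurableEmbedding (@WithLp.ofLp 2 (Fin d → ℝ)) :=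
    (MeasurableEquiv.toLp 2 (Fin d → ℝ)).symm.measurableEmbedding
  have hpre : (@WithLp.ofLp 2 (Fin d → ℝ)) ⁻¹' (Bs d) = Metric.closedBall (0 : EuclideanSpace ℝ (Fin d)) 1 := by
    ext u
    simp only [Bs, Set.mem_preimage, Set.mem_ofPred_eq, Metric.mem_closedBall, dist_zero_right]
    rw [EuclideanSpace.norm_eq, Real.sqrt_le_one]
    simp
  rw [← hmp.setIntegral_preimage_emb hemb, ← hmp.setIntegral_preimage_emb hemb, hpre]
  set v : EuclideanSpace ℝ (Fin d) := WithLp.toLp 2 ζ with hv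
  set w : EuclideanSpace ℝ (Fin d) := EuclideanSpace.single i0 (√(∑ i, ζ i ^ 2)) with hw
  have hnorm : ‖v‖ = ‖w‖ := by
    rw [hw, EuclideanSpace.norm_single, EuclideanSpace.norm_eq]
    simp [hv, abs_of_nonneg (sqrt_nonneg _)]
  have h1 : ∀ u : EuclideanSpace ℝ (Fin d), ∑ i, ζ i * u.ofLp i = inner ℝ v u := by
    intro u
    simp [hv, PiLp.inner_apply, mul_comm]
  have h2 : ∀ u : EuclideanSpace ℝ (Fin d), √(∑ i, ζ i ^ 2) * u.ofLp i0 = inner ℝ w u := by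
    intro u
    rw [hw, EuclideanSpace.inner_single_left]; simp
  simp only [h1, h2]
  set R := Submodule.reflection (Submodule.span ℝ {v - w})ᗮ with hR
  have hRv : R v = w := Submodule.reflection_sub hnorm
  have hRmp : MeasurePreserving R := R.measurePreserving
  have hRemb : MeasurableEmbedding R := R.toHomeomorph.measurableEmbedding
  rw [← hRmp.setIntegral_preimage_emb hRemb (fun u => cos (inner ℝ w u))]
  have hpre2 : R ⁻¹' Metric.closedBall (0 : EuclideanSpace ℝ (Fin d)) 1 = Metric.closedBall 0 1 := by
    ext u; simp
  rw [hpre2]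
  apply integral_congr_ae
  filter_upwards with u
  rw [← hRv, LinearIsometryEquiv.inner_map_map]

lemma gauss_moment_1d (k : ℕ) : Integrable (fun x : ℝ => x^(2*k) * exp (-x^2)) ∧
    ∫ x : ℝ, x^(2*k) * exp (-x^2) = Real.Gamma (k + 1/2) := by
  constructor
  · have := integrable_rpow_mul_exp_neg_mul_sq (b := 1) one_pos (s := ((2*k:ℕ):ℝ)) (by
      have : (0:ℝ) ≤ ((2*k:ℕ):ℝ) := by positivity
      linarith)
    simp only [rpow_natCast] at this
    simpa using this
  · have h1 : ∫ x : ℝ, x^(2*k) * exp (-x^2) = ∫ x : ℝ, (fun x : ℝ => x^(2*k) * exp (-x^2)) |x| := by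
      apply integral_congr_ae
      filter_upwards with x
      simp only [sq_abs, pow_mul]
    rw [h1, integral_comp_abs (f := fun x : ℝ => x^(2*k) * exp (-x^2))]
    have h2 := integral_rpow_mul_exp_neg_rpow (p := 2) (q := ((2*k:ℕ):ℝ)) (by norm_num) (by
      have : (0:ℝ) ≤ ((2*k:ℕ):ℝ) := by positivity
      linarith)
    simp only [rpow_natCast, rpow_ofNat] at h2
    rw [h2]
    push_cast
    rw [show (2 * (k:ℝ) + 1)/2 = k + 1/2 by ring]
    ring

lemma gauss_moment (d : ℕ) (i0 : Fin d) (k : ℕ) :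
    Integrable (fun w : Fin d → ℝ => w i0 ^ (2*k) * exp (-∑ i, w i ^ 2)) ∧
    ∫ w : Fin d → ℝ, w i0 ^ (2*k) * exp (-∑ i, w i ^ 2) = Real.Gamma (k + 1/2) * √π ^ (d - 1) := by
  have e : (fun w : Fin d → ℝ => w i0 ^ (2*k) * exp (-∑ i, w i ^ 2)) = fun w =>
      ∏ i, (fun (i : Fin d) (x : ℝ) => x^(2*(if i = i0 then k else 0)) * exp (-x^2)) i (w i) := by
    ext w
    rw [Finset.prod_mul_distrib, ← Real.exp_sum, Finset.sum_neg_distrib]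
    congr 1
    rw [Finset.prod_eq_single i0]
    · simp
    · intro b _ hb; simp [hb]
    · simp
  rw [e]
  constructor
  · exact Integrable.fintype_prod (f := fun (i : Fin d) (x : ℝ) => x^(2*(if i = i0 then k else 0)) * exp (-x^2))
      (fun i => (gauss_moment_1d _).1)
  · rw [integral_fintype_prod_volume_eq_prod (f := fun (i : Fin d) (x : ℝ) => x^(2*(if i = i0 then k else 0)) * exp (-x^2))]
    simp only [(gauss_moment_1d _).2]
    rw [← Finset.mul_prod_erase _ _ (Finset.mem_univ i0)]
    congr 1
    · simp
    · rw [Finset.prod_congr rfl (g := fun _ => √π)]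
      · simp [Finset.card_erase_of_mem]
      · intro i hi
        rw [if_neg (Finset.ne_of_mem_erase hi)]
        rw [Nat.cast_zero, zero_add, Real.Gamma_one_half_eq]


lemma ball_scale (d : ℕ) (i0 : Fin d) (k : ℕ) (s : ℝ) (hs : 0 < s) :
    ∫ w : Fin d → ℝ, (if ∑ i, w i ^ 2 ≤ s then w i0 ^ (2*k) else 0) =
      s ^ ((d:ℝ)/2 + k) * ∫ w in Bs d, w i0 ^ (2*k) := by
  have h := Measure.integral_comp_smul_of_nonneg (μ := (volume : Measure (Fin d → ℝ)))
    (fun w : Fin d → ℝ => (if ∑ i, w i ^ 2 ≤ s then w i0 ^ (2*k) else 0)) (√s) (hR := sqrt_nonneg s)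
  have h2 : ∀ w : Fin d → ℝ, (if ∑ i, (√s • w) i ^ 2 ≤ s then (√s • w) i0 ^ (2*k) else 0)
      = s^k * (Bs d).indicator (fun w => w i0 ^ (2*k)) w := by
    intro w
    have e : ∑ i, (√s • w) i ^ 2 = s * ∑ i, w i ^ 2 := by
      simp [mul_pow, sq_sqrt hs.le, Finset.mul_sum]
    have e2 : (s * ∑ i, w i ^ 2 ≤ s) ↔ w ∈ Bs d := by
      simp only [Bs, Set.mem_ofPred_eq]
      constructor
      · intro h; nlinarith
      · intro h; nlinarith
    rw [e]
    by_cases hw : w ∈ Bs d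
    · rw [if_pos (e2.2 hw), Set.indicator_of_mem hw]
      simp only [Pi.smul_apply, smul_eq_mul, mul_pow, pow_mul, sq_sqrt hs.le]
    · rw [if_neg (fun h => hw (e2.1 h)), Set.indicator_of_notMem hw, mul_zero]
  simp only [h2] at h
  rw [integral_const_mul, integral_indicator (Bs_meas d)] at h
  have h3 : s ^ ((d:ℝ)/2 + k) = (√s)^d * s^k := by
    rw [rpow_add hs, rpow_natCast, sqrt_eq_rpow, ← rpow_natCast (s ^ (1/2:ℝ)), ← rpow_mul hs.le]
    congr 2; ring
  rw [h3, mul_assoc, h]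
  simp only [Module.finrank_fintype_fun_eq_card, Fintype.card_fin, smul_eq_mul]
  have : (√s)^d ≠ 0 := by have := sqrt_pos.2 hs; positivity
  field_simp

lemma layer_cake (d : ℕ) (i0 : Fin d) (k : ℕ) :
    ∫ w : Fin d → ℝ, w i0 ^ (2*k) * exp (-∑ i, w i ^ 2) =
      Real.Gamma ((d:ℝ)/2 + k + 1) * ∫ w in Bs d, w i0 ^ (2*k) := by
  set F : (Fin d → ℝ) → ℝ → ℝ := fun w s => if ∑ i, w i ^ 2 ≤ s then w i0 ^ (2*k) * exp (-s) else 0 with hF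
  have hin : ∀ w : Fin d → ℝ, IntegrableOn (F w) (Set.Ioi 0) ∧
      ∫ s in Set.Ioi (0:ℝ), F w s = w i0 ^ (2*k) * exp (-∑ i, w i ^ 2) := by
    intro w
    set a := ∑ i, w i ^ 2 with ha
    have ha0 : 0 ≤ a := Finset.sum_nonneg fun i _ => sq_nonneg _
    have e : F w = (Set.Ici a).indicator (fun s => w i0 ^ (2*k) * exp (-s)) := by
      ext s
      simp only [hF, Set.indicator_apply, Set.mem_Ici, ← ha]
    rw [e]
    have hI : IntegrableOn (fun s => w i0 ^ (2*k) * exp (-s)) (Set.Ioi a) :=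
      (integrableOn_exp_neg_Ioi a).const_mul _
    constructor
    · rw [integrableOn_indicator_iff measurableSet_Ici]
      exact IntegrableOn.mono_set (show IntegrableOn (fun s => w i0^(2*k) * exp (-s)) (Set.Ioi 0) volume from (integrableOn_exp_neg_Ioi 0).const_mul _) Set.inter_subset_right
    · rw [setIntegral_indicator measurableSet_Ici]
      have hae : (Set.Ioi 0 ∩ Set.Ici a : Set ℝ) =ᵐ[volume] Set.Ioi a := by
        have h1 : (Set.Ioi 0 ∩ Set.Ici a : Set ℝ) =ᵐ[volume] (Set.Ioi 0 ∩ Set.Ioi a : Set ℝ) :=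
          ae_eq_set_inter (ae_eq_refl _) Ioi_ae_eq_Ici.symm
        refine h1.trans ?_
        rw [Set.inter_eq_right.2 (Set.Ioi_subset_Ioi ha0)]
        exact ae_eq_refl _
      rw [setIntegral_congr_set hae, integral_const_mul, integral_exp_neg_Ioi]
  have hmeas : Measurable (Function.uncurry F) := by
    have : Function.uncurry F = fun p : (Fin d → ℝ) × ℝ =>
      if ∑ i, p.1 i ^ 2 ≤ p.2 then p.1 i0 ^ (2*k) * exp (-p.2) else 0 := by
      ext p; rfl
    rw [this]
    apply Measurable.ite
    · exact measurableSet_le (by fun_prop) (by fun_prop)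
    · fun_prop
    · fun_prop
  have hint : Integrable (Function.uncurry F) (volume.prod (volume.restrict (Set.Ioi (0:ℝ)))) := by
    rw [integrable_prod_iff hmeas.aestronglyMeasurable]
    constructor
    · filter_upwards with w using (hin w).1
    · have : ∀ w : Fin d → ℝ, ∫ s in Set.Ioi (0:ℝ), ‖Function.uncurry F (w, s)‖ = w i0 ^ (2*k) * exp (-∑ i, w i ^ 2) := by
        intro w
        rw [← (hin w).2]
        apply integral_congr_ae
        filter_upwards with s
        simp only [Function.uncurry]
        rw [Real.norm_eq_abs, abs_of_nonneg]
        simp only [hF]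
        split_ifs
        · have : 0 ≤ w i0 ^ (2*k) := by rw [pow_mul]; positivity
          positivity
        · exact le_rfl
      simp only [this]
      exact (gauss_moment d i0 k).1
  have hswap := integral_integral_swap hint
  simp only [(hin _).2] at hswap
  rw [hswap, Real.Gamma_eq_integral (by positivity), ← integral_mul_const]
  apply setIntegral_congr_fun measurableSet_Ioi
  intro s hs
  simp only
  have e : ∀ w : Fin d → ℝ, F w s = exp (-s) * (if ∑ i, w i ^ 2 ≤ s then w i0 ^ (2*k) else 0) := by
    intro w
    simp only [hF]
    split_ifs <;> ring
  simp only [e]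
  rw [integral_const_mul, ball_scale d i0 k s hs, add_sub_cancel_right]
  ring

lemma gamma_half (k : ℕ) : Real.Gamma (k + 1/2) * (4^k * (k.factorial : ℝ)) = ((2*k).factorial : ℝ) * √π := by
  induction k with
  | zero => rw [Nat.cast_zero, zero_add, Real.Gamma_one_half_eq]; simp
  | succ k ih =>
    have h1 : ((k+1:ℕ):ℝ) + 1/2 = (k + 1/2) + 1 := by push_cast; ring
    rw [h1, Real.Gamma_add_one (by positivity), show 2 * (k+1) = 2*k+1+1 by ring, Nat.factorial_succ (2*k+1),
      Nat.factorial_succ (2*k), Nat.factorial_succ k]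
    push_cast
    rw [pow_succ]
    linear_combination 2 * (2 * (k:ℝ)+1) * (k+1) * ih

lemma gamma_pch (d k : ℕ) : Real.Gamma ((d:ℝ)/2 + k + 1) = pch ((d:ℝ)/2+1) k * Real.Gamma ((d:ℝ)/2+1) := by
  induction k with
  | zero => simp [pch_zero]
  | succ k ih =>
    have h1 : (d:ℝ)/2 + ((k+1:ℕ):ℝ) + 1 = ((d:ℝ)/2 + k + 1) + 1 := by push_cast; ring
    rw [h1, Real.Gamma_add_one (by positivity), ih, pch_succ]
    ring

lemma ball_moment (d : ℕ) (i0 : Fin d) (k : ℕ) :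
    ∫ w in Bs d, w i0 ^ (2*k) = π ^ ((d:ℝ)/2) / Real.Gamma ((d:ℝ)/2+1) *
      (((2*k).factorial : ℝ) / (4^k * (pch ((d:ℝ)/2+1) k * (k.factorial : ℝ)))) := by
  have h := layer_cake d i0 k
  rw [(gauss_moment d i0 k).2, gamma_pch] at h
  have h1 := gamma_half k
  have hG : Real.Gamma ((d:ℝ)/2+1) ≠ 0 := (Real.Gamma_pos_of_pos (by positivity)).ne'
  have hp : pch ((d:ℝ)/2+1) k ≠ 0 := (pch_pos (by positivity) k).ne'
  have hk : (k.factorial : ℝ) ≠ 0 := by positivity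
  have hpi : π ^ ((d:ℝ)/2) = √π * √π ^ (d-1) := by
    rw [← pow_succ', Nat.sub_add_cancel (Fin.pos i0), sqrt_eq_rpow, ← rpow_natCast, ← rpow_mul pi_pos.le]
    congr 1; ring
  have hs : √π ≠ 0 := (sqrt_pos.2 pi_pos).ne'
  rw [hpi]
  generalize Real.Gamma ((d:ℝ)/2+1) = G at *
  generalize pch ((d:ℝ)/2+1) k = p at *
  generalize (∫ w in Bs d, w i0 ^ (2*k)) = J at *
  generalize Real.Gamma ((k:ℝ)+1/2) = K at *
  generalize √π ^ (d-1) = S at *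
  field_simp
  linear_combination (-(4^k * (k.factorial:ℝ))) * h + S * h1

lemma ball_transform (d : ℕ) (hd : 1 ≤ d) (ζ : Fin d → ℝ) :
    ∫ w in Bs d, cos (∑ i, ζ i * w i) =
      π ^ ((d:ℝ)/2) / Real.Gamma ((d:ℝ)/2+1) * Gs d ((∑ i, ζ i ^ 2)/4) := by
  set i0 : Fin d := ⟨0, hd⟩
  rw [ball_rotate d i0 ζ]
  set z := √(∑ i, ζ i ^ 2) with hz
  have hz2 : z^2 = ∑ i, ζ i ^ 2 := sq_sqrt (Finset.sum_nonneg fun i _ => sq_nonneg _)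
  have hz0 : 0 ≤ z := sqrt_nonneg _
  haveI : IsFiniteMeasure (volume.restrict (Bs d)) := ⟨by simpa using Bs_finite d⟩
  have hcoord : ∀ᵐ w ∂(volume.restrict (Bs d)), |w i0| ≤ 1 := by
    rw [ae_restrict_iff' (Bs_meas d)]
    exact ae_of_all _ fun w hw => Bs_coord hw i0
  have hs := hasSum_integral_of_dominated_convergence (μ := volume.restrict (Bs d))
    (F := fun (k : ℕ) (w : Fin d → ℝ) => (-1:ℝ)^k * (z * w i0)^(2*k) / ((2*k).factorial : ℝ))
    (f := fun w => cos (z * w i0))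
    (bound := fun k _ => (z^2)^k / (k.factorial : ℝ)) ?_ ?_ ?_ ?_ ?_
  · have e : ∀ k : ℕ, ∫ w in Bs d, (-1:ℝ)^k * (z * w i0)^(2*k) / ((2*k).factorial : ℝ) =
        π ^ ((d:ℝ)/2) / Real.Gamma ((d:ℝ)/2+1) *
          ((-((∑ i, ζ i ^ 2)/4))^k / (pch ((d:ℝ)/2+1) k * (k.factorial : ℝ))) := by
      intro k
      have : ∀ w : Fin d → ℝ, (-1:ℝ)^k * (z * w i0)^(2*k) / ((2*k).factorial : ℝ) =
        ((-1:ℝ)^k * z^(2*k) / ((2*k).factorial : ℝ)) * w i0 ^(2*k) := by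
        intro w; rw [mul_pow]; ring
      rw [integral_congr_ae (ae_of_all _ this), integral_const_mul, ball_moment, ← hz2]
      have hp : pch ((d:ℝ)/2+1) k ≠ 0 := (pch_pos (by positivity) k).ne'
      have hk : (k.factorial : ℝ) ≠ 0 := by positivity
      have hk2 : ((2*k).factorial : ℝ) ≠ 0 := by positivity
      rw [neg_pow (z^2/4), div_pow, ← pow_mul]
      field_simp
    rw [← hs.tsum_eq]
    rw [tsum_congr e, tsum_mul_left, Gs]
  · intro k
    exact Continuous.aestronglyMeasurable (by fun_prop)
  · intro k
    filter_upwards [hcoord] with w hw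
    rw [norm_div, norm_mul, norm_pow, norm_pow, norm_neg, norm_one, one_pow, one_mul, norm_mul,
      Real.norm_eq_abs, Real.norm_eq_abs, abs_of_nonneg hz0, Real.norm_eq_abs,
      abs_of_pos (by positivity : (0:ℝ) < ((2*k).factorial:ℝ)), ← pow_mul]
    have : (k.factorial : ℝ) ≤ ((2*k).factorial : ℝ) := by
      exact_mod_cast Nat.factorial_le (by omega)
    gcongr
    nlinarith
  · exact ae_of_all _ fun _ => Real.summable_pow_div_factorial _
  · exact integrable_const _
  · exact ae_of_all _ fun w => Real.hasSum_cos _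

def Cb (d : ℕ) : Set (Fin d → ℝ) := Set.pi Set.univ (fun _ => Set.Icc (-π) π)

lemma Cb_compact (d : ℕ) : IsCompact (Cb d) := isCompact_univ_pi fun _ => isCompact_Icc

lemma Cb_meas (d : ℕ) : MeasurableSet (Cb d) := (Cb_compact d).measurableSet

lemma Cb_int {d : ℕ} {F : (Fin d → ℝ) → ℝ} (hF : Continuous F) : IntegrableOn F (Cb d) volume :=
  hF.continuousOn.integrableOn_compact (Cb_compact d)

lemma int1d (a : ℝ) : ∫ t in Set.Icc (-π) π, Complex.exp (((t * a : ℝ) : ℂ) * Complex.I) =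
    ((2 * π * sinc (π * a) : ℝ) : ℂ) := by
  rw [integral_Icc_eq_integral_Ioc, ← intervalIntegral.integral_of_le (by linarith [pi_pos])]
  rcases eq_or_ne a 0 with rfl | ha
  · simp
    ring
  · have hc : (a : ℂ) * Complex.I ≠ 0 := mul_ne_zero (by exact_mod_cast ha) Complex.I_ne_zero
    have h := integral_exp_mul_complex (a := -π) (b := π) hc
    have e : ∀ t : ℝ, Complex.exp (((t * a : ℝ) : ℂ) * Complex.I) = Complex.exp ((a : ℂ) * Complex.I * t) := by
      intro t; congr 1; push_cast; ring
    simp only [e]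
    rw [h, sinc_of_ne_zero (mul_ne_zero pi_ne_zero ha)]
    have e1 : (a : ℂ) * Complex.I * (π : ℝ) = ((π * a : ℝ) : ℂ) * Complex.I := by push_cast; ring
    have e2 : (a : ℂ) * Complex.I * ((-π : ℝ) : ℂ) = ((-(π * a) : ℝ) : ℂ) * Complex.I := by push_cast; ring
    rw [e1, e2, Complex.exp_ofReal_mul_I, Complex.exp_ofReal_mul_I, Real.cos_neg, Real.sin_neg]
    have ha' : (a : ℂ) ≠ 0 := by exact_mod_cast ha
    have hpi : (π : ℂ) ≠ 0 := by exact_mod_cast pi_ne_zero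
    push_cast
    field_simp
    ring

lemma cube_exp (d : ℕ) (a : Fin d → ℝ) : ∫ ξ in Cb d, Complex.exp (((∑ i, ξ i * a i : ℝ) : ℂ) * Complex.I) =
    (((2*π)^d * ∏ i, sinc (π * a i) : ℝ) : ℂ) := by
  rw [Cb, volume_pi, Measure.restrict_pi_pi]
  have e : ∀ ξ : Fin d → ℝ, Complex.exp (((∑ i, ξ i * a i : ℝ) : ℂ) * Complex.I) =
      ∏ i, (fun (i : Fin d) (t : ℝ) => Complex.exp (((t * a i : ℝ) : ℂ) * Complex.I)) i (ξ i) := by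
    intro ξ
    rw [← Complex.exp_sum, ← Finset.sum_mul]
    push_cast
    rfl
  simp only [e]
  rw [integral_fintype_prod_eq_prod (f := fun (i : Fin d) (t : ℝ) => Complex.exp (((t * a i : ℝ) : ℂ) * Complex.I))]
  simp only [int1d]
  rw [← Complex.ofReal_prod, Finset.prod_mul_distrib]
  simp

lemma cube_cos (d : ℕ) (a : Fin d → ℝ) : ∫ ξ in Cb d, cos (∑ i, ξ i * a i) =
    (2*π)^d * ∏ i, sinc (π * a i) := by
  have hint : IntegrableOn (fun ξ : Fin d → ℝ => Complex.exp (((∑ i, ξ i * a i : ℝ) : ℂ) * Complex.I)) (Cb d) volume :=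
    (Continuous.continuousOn (by fun_prop)).integrableOn_compact (Cb_compact d)
  have h := integral_re hint
  rw [cube_exp] at h
  have e : ∀ ξ : Fin d → ℝ, RCLike.re (Complex.exp (((∑ i, ξ i * a i : ℝ) : ℂ) * Complex.I)) = cos (∑ i, ξ i * a i) :=
    fun ξ => Complex.exp_ofReal_mul_I_re _
  rw [integral_congr_ae (ae_of_all _ e)] at h
  exact h.trans (Complex.ofReal_re _)

def dotZ {d : ℕ} (ξ : Fin d → ℝ) (v : Fin d → ℤ) : ℝ := ∑ i, ξ i * (v i : ℝ)

lemma dotZ_sub {d : ℕ} (ξ : Fin d → ℝ) (v w : Fin d → ℤ) : dotZ ξ (v - w) = dotZ ξ v - dotZ ξ w := by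
  simp [dotZ, mul_sub]

lemma dotZ_add {d : ℕ} (ξ : Fin d → ℝ) (v w : Fin d → ℤ) : dotZ ξ (v + w) = dotZ ξ v + dotZ ξ w := by
  simp [dotZ, mul_add, Finset.sum_add_distrib]

lemma dotZ_neg {d : ℕ} (ξ : Fin d → ℝ) (v : Fin d → ℤ) : dotZ ξ (-v) = - dotZ ξ v := by
  simp [dotZ]

lemma dotZ_cont {d : ℕ} (v : Fin d → ℤ) : Continuous (fun ξ : Fin d → ℝ => dotZ ξ v) := by
  unfold dotZ; fun_prop

lemma cube_cosZ (d : ℕ) (v : Fin d → ℤ) : ∫ ξ in Cb d, cos (dotZ ξ v) =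
    (2*π)^d * (if v = 0 then 1 else 0) := by
  unfold dotZ
  rw [cube_cos d (fun i => (v i : ℝ))]
  congr 1
  split_ifs with h
  · subst h; simp
  · obtain ⟨i, hi⟩ : ∃ i, v i ≠ 0 := by
      by_contra hc; push Not at hc; exact h (funext hc)
    apply Finset.prod_eq_zero (Finset.mem_univ i)
    have : (π * (v i : ℝ)) ≠ 0 := mul_ne_zero pi_ne_zero (by exact_mod_cast hi)
    rw [sinc_of_ne_zero this, mul_comm, Real.sin_int_mul_pi, zero_div]

lemma cube_orth (d : ℕ) (v w : Fin d → ℤ) : ∫ ξ in Cb d, cos (dotZ ξ v) * cos (dotZ ξ w) =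
    (2*π)^d / 2 * ((if v = w then 1 else 0) + (if v = -w then 1 else 0)) := by
  have e : ∀ ξ : Fin d → ℝ, cos (dotZ ξ v) * cos (dotZ ξ w) =
      (1/2) * cos (dotZ ξ (v - w)) + (1/2) * cos (dotZ ξ (v + w)) := by
    intro ξ
    rw [dotZ_sub, dotZ_add, Real.cos_sub, Real.cos_add]; ring
  rw [integral_congr_ae (ae_of_all _ e), integral_add, integral_const_mul, integral_const_mul, cube_cosZ, cube_cosZ]
  · simp only [sub_eq_zero, add_eq_zero_iff_eq_neg]; ring
  · exact (Cb_int (Real.continuous_cos.comp (dotZ_cont _))).const_mul _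
  · exact (Cb_int (Real.continuous_cos.comp (dotZ_cont _))).const_mul _

lemma bessel_fin (d : ℕ) (F : (Fin d → ℝ) → ℝ) (hF : Continuous F) (S : Finset (Fin d → ℤ)) :
    ∑ v ∈ S, (∫ ξ in Cb d, F ξ * cos (dotZ ξ v))^2 ≤ (2*π)^d * ∫ ξ in Cb d, F ξ ^ 2 := by
  set c : (Fin d → ℤ) → ℝ := fun v => ∫ ξ in Cb d, F ξ * cos (dotZ ξ v) with hc
  have hcneg : ∀ v, c (-v) = c v := by
    intro v; simp only [hc, dotZ_neg, Real.cos_neg]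
  have hcc : ∀ v, Continuous (fun ξ : Fin d → ℝ => cos (dotZ ξ v)) := fun v => Real.continuous_cos.comp (dotZ_cont _)
  set K : ℝ := (2*π)^d with hK
  have hKpos : 0 < K := by have := pi_pos; positivity
  set g : (Fin d → ℝ) → ℝ := fun ξ => ∑ v ∈ S, c v * cos (dotZ ξ v) with hg
  have hgc : Continuous g := continuous_finsetSum _ fun v _ => continuous_const.mul (hcc v)
  have hFg : ∫ ξ in Cb d, F ξ * g ξ = ∑ v ∈ S, c v ^ 2 := by
    have e : ∀ ξ : Fin d → ℝ, F ξ * g ξ = ∑ v ∈ S, c v * (F ξ * cos (dotZ ξ v)) := by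
      intro ξ; simp only [hg, Finset.mul_sum]; exact Finset.sum_congr rfl fun _ _ => by ring
    rw [integral_congr_ae (ae_of_all _ e), integral_finsetSum]
    · exact Finset.sum_congr rfl fun v _ => by rw [integral_const_mul, sq]
    · intro v _
      exact (Cb_int (hF.mul (hcc v))).const_mul _
  have hgg : ∫ ξ in Cb d, g ξ ^ 2 ≤ K * ∑ v ∈ S, c v ^ 2 := by
    have e : ∀ ξ : Fin d → ℝ, g ξ ^ 2 = ∑ v ∈ S, ∑ w ∈ S, (c v * c w) * (cos (dotZ ξ v) * cos (dotZ ξ w)) := by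
      intro ξ; simp only [hg, sq, Finset.sum_mul_sum]
      exact Finset.sum_congr rfl fun _ _ => Finset.sum_congr rfl fun _ _ => by ring
    rw [integral_congr_ae (ae_of_all _ e), integral_finsetSum]
    · rw [Finset.mul_sum]
      apply Finset.sum_le_sum
      intro v hv
      rw [integral_finsetSum]
      · simp only [integral_const_mul, cube_orth]
        have h1 : ∑ w ∈ S, c v * c w * ((2*π)^d / 2 * ((if v = w then 1 else 0) + (if v = -w then 1 else 0))) =
          K/2 * c v * (∑ w ∈ S, if v = w then c w else 0) + K/2 * c v * (∑ w ∈ S, if -v = w then c w else 0) := by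
          rw [Finset.mul_sum, Finset.mul_sum, ← Finset.sum_add_distrib]
          apply Finset.sum_congr rfl
          intro w _
          have : (v = -w) ↔ (-v = w) := by rw [neg_eq_iff_eq_neg]
          simp only [this]
          split_ifs <;> ring
        rw [h1, Finset.sum_ite_eq, Finset.sum_ite_eq, if_pos hv]
        have := hcneg v
        split_ifs
        · rw [this]; nlinarith
        · nlinarith [mul_nonneg hKpos.le (sq_nonneg (c v))]
      · intro w _
        exact (Cb_int ((hcc v).mul (hcc w))).const_mul _
    · intro v _
      exact Cb_int (continuous_finsetSum _ fun w _ => continuous_const.mul ((hcc v).mul (hcc w)))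
  have hpos : 0 ≤ ∫ ξ in Cb d, (F ξ - K⁻¹ * g ξ)^2 := integral_nonneg fun _ => sq_nonneg _
  have e : ∀ ξ : Fin d → ℝ, (F ξ - K⁻¹ * g ξ)^2 = F ξ ^ 2 - 2 * K⁻¹ * (F ξ * g ξ) + K⁻¹^2 * g ξ ^ 2 := by
    intro ξ; ring
  have i1 : IntegrableOn (fun ξ => F ξ ^ 2) (Cb d) volume := Cb_int (hF.pow 2)
  have i2 : IntegrableOn (fun ξ => 2 * K⁻¹ * (F ξ * g ξ)) (Cb d) volume := Cb_int (continuous_const.mul (hF.mul hgc))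
  have i3 : IntegrableOn (fun ξ => K⁻¹^2 * g ξ ^ 2) (Cb d) volume := Cb_int (continuous_const.mul (hgc.pow 2))
  have i12 : IntegrableOn (fun ξ => F ξ ^ 2 - 2 * K⁻¹ * (F ξ * g ξ)) (Cb d) volume :=
    Cb_int ((hF.pow 2).sub (continuous_const.mul (hF.mul hgc)))
  rw [integral_congr_ae (ae_of_all _ e), integral_add i12 i3, integral_sub i1 i2, integral_const_mul,
    integral_const_mul, hFg] at hpos
  have h3 : K⁻¹^2 * ∫ ξ in Cb d, g ξ ^ 2 ≤ K⁻¹^2 * (K * ∑ v ∈ S, c v ^ 2) := by gcongr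
  have h4 : K⁻¹^2 * (K * ∑ v ∈ S, c v ^ 2) = K⁻¹ * ∑ v ∈ S, c v ^ 2 := by field_simp
  have h5 : K⁻¹ * ∑ v ∈ S, c v ^ 2 ≤ ∫ ξ in Cb d, F ξ ^ 2 := by linarith
  rwa [inv_mul_le_iff₀ hKpos] at h5

lemma bessel (d : ℕ) (F : (Fin d → ℝ) → ℝ) (hF : Continuous F) :
    ∑' v : Fin d → ℤ, (∫ ξ in Cb d, F ξ * cos (dotZ ξ v))^2 ≤ (2*π)^d * ∫ ξ in Cb d, F ξ ^ 2 :=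
  Real.tsum_le_of_sum_le (fun _ => sq_nonneg _) (fun S => bessel_fin d F hF S)

def Wf {d : ℕ} (S : Finset (Fin d → ℤ)) (ω : (Fin d → ℤ) → ℝ) (ξ : Fin d → ℝ) : ℝ :=
  ∑ w ∈ S, ω w * cos (dotZ ξ w)

lemma Wf_cont {d : ℕ} (S : Finset (Fin d → ℤ)) (ω : (Fin d → ℤ) → ℝ) : Continuous (Wf S ω) :=
  continuous_finsetSum _ fun w _ => continuous_const.mul (Real.continuous_cos.comp (dotZ_cont w))

lemma sin_sum_zero {d : ℕ} (S : Finset (Fin d → ℤ)) (ω : (Fin d → ℤ) → ℝ) (hS : ∀ v, v ∉ S → ω v = 0)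
    (hsymm : ∀ v, ω (-v) = ω v) (ξ : Fin d → ℝ) : ∑ w ∈ S, ω w * sin (dotZ ξ w) = 0 := by
  have h1 : ∑' w, ω w * sin (dotZ ξ w) = ∑ w ∈ S, ω w * sin (dotZ ξ w) :=
    tsum_eq_sum fun b hb => by rw [hS b hb, zero_mul]
  have h2 := (Equiv.neg (Fin d → ℤ)).tsum_eq (fun w => ω w * sin (dotZ ξ w))
  simp only [Equiv.neg_apply, hsymm, dotZ_neg, Real.sin_neg, mul_neg, tsum_neg] at h2
  linarith

lemma conv_rep {d : ℕ} (S : Finset (Fin d → ℤ)) (ω : (Fin d → ℤ) → ℝ) (hS : ∀ v, v ∉ S → ω v = 0)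
    (hsymm : ∀ v, ω (-v) = ω v) (F : (Fin d → ℝ) → ℝ) (hF : Continuous F) (y : (Fin d → ℤ) → ℝ) (K : ℝ)
    (hy : ∀ v, y v = K * ∫ ξ in Cb d, F ξ * cos (dotZ ξ v)) (v : Fin d → ℤ) :
    latticeConv ω y v = K * ∫ ξ in Cb d, (Wf S ω ξ * F ξ) * cos (dotZ ξ v) := by
  unfold latticeConv
  have h1 := (Equiv.subLeft v).tsum_eq (fun η => ω (v - η) * y η)
  simp only [Equiv.subLeft_apply, sub_sub_cancel] at h1
  rw [← h1, tsum_eq_sum (s := S) (fun b hb => by rw [hS b hb, zero_mul])]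
  simp only [hy]
  have e : ∀ ξ, (Wf S ω ξ * F ξ) * cos (dotZ ξ v) = ∑ w ∈ S, ω w * (F ξ * cos (dotZ ξ (v - w))) := by
    intro ξ
    have e1 : ∑ w ∈ S, ω w * (F ξ * cos (dotZ ξ (v - w))) =
        F ξ * cos (dotZ ξ v) * ∑ w ∈ S, ω w * cos (dotZ ξ w) + F ξ * sin (dotZ ξ v) * ∑ w ∈ S, ω w * sin (dotZ ξ w) := by
      rw [Finset.mul_sum, Finset.mul_sum, ← Finset.sum_add_distrib]
      refine Finset.sum_congr rfl fun w _ => ?_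
      rw [dotZ_sub, Real.cos_sub]; ring
    rw [e1, sin_sum_zero S ω hS hsymm, Wf]; ring
  rw [integral_congr_ae (ae_of_all _ e), integral_finsetSum, Finset.mul_sum]
  · refine Finset.sum_congr rfl fun w _ => ?_
    rw [integral_const_mul]; ring
  · intro w _
    exact (Cb_int (hF.mul (Real.continuous_cos.comp (dotZ_cont _)))).const_mul _

lemma PW_cont {d : ℕ} (n : ℕ) (S : Finset (Fin d → ℤ)) (ω : (Fin d → ℤ) → ℝ) :
    Continuous (fun ξ => Pv d n ((1 - Wf S ω ξ)/2)) := by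
  have := Wf_cont S ω
  unfold Pv
  exact (Pp d n).continuous.comp (by fun_prop)

lemma x_rep {d : ℕ} (hd : 1 ≤ d) (S : Finset (Fin d → ℤ)) (ω : (Fin d → ℤ) → ℝ) (hS : ∀ v, v ∉ S → ω v = 0)
    (hsymm : ∀ v, ω (-v) = ω v)
    (x : ℕ → (Fin d → ℤ) → ℝ)
    (hx0 : ∀ v, x 0 v = if v = 0 then 1 else 0)
    (hx1 : ∀ v, x 1 v = aCoef0 d * latticeConv ω (x 0) v + bCoef0 d * x 0 v)
    (hrec : ∀ n, 1 ≤ n → ∀ v,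
      x (n + 1) v = aCoef d n * latticeConv ω (x n) v + bCoef d n * x n v - cCoef d n * x (n - 1) v) (n : ℕ) :
    (∀ v, x n v = ((2*π)^d)⁻¹ * ∫ ξ in Cb d, Pv d n ((1 - Wf S ω ξ)/2) * cos (dotZ ξ v)) ∧
    (∀ v, x (n+1) v = ((2*π)^d)⁻¹ * ∫ ξ in Cb d, Pv d (n+1) ((1 - Wf S ω ξ)/2) * cos (dotZ ξ v)) := by
  have hcc : ∀ v, Continuous (fun ξ : Fin d → ℝ => cos (dotZ ξ v)) := fun v => Real.continuous_cos.comp (dotZ_cont _)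
  have hK : (2*π)^d ≠ 0 := by have := pi_pos; positivity
  have hi : ∀ (m : ℕ) v, IntegrableOn (fun ξ => Pv d m ((1 - Wf S ω ξ)/2) * cos (dotZ ξ v)) (Cb d) volume :=
    fun m v => Cb_int ((PW_cont m S ω).mul (hcc v))
  have hiW : ∀ (m : ℕ) v, IntegrableOn (fun ξ => (Wf S ω ξ * Pv d m ((1 - Wf S ω ξ)/2)) * cos (dotZ ξ v)) (Cb d) volume :=
    fun m v => Cb_int (((Wf_cont S ω).mul (PW_cont m S ω)).mul (hcc v))
  induction n with
  | zero =>
    have h0 : ∀ v, x 0 v = ((2*π)^d)⁻¹ * ∫ ξ in Cb d, Pv d 0 ((1 - Wf S ω ξ)/2) * cos (dotZ ξ v) := by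
      intro v
      simp only [Pv_zero, one_mul]
      rw [cube_cosZ, hx0, inv_mul_cancel_left₀ hK]
    refine ⟨h0, fun v => ?_⟩
    rw [zero_add, hx1, conv_rep S ω hS hsymm _ (PW_cont 0 S ω) (x 0) _ h0, h0 v]
    have e : ∀ ξ, Pv d 1 ((1 - Wf S ω ξ)/2) * cos (dotZ ξ v) =
        aCoef0 d * ((Wf S ω ξ * Pv d 0 ((1 - Wf S ω ξ)/2)) * cos (dotZ ξ v)) +
        bCoef0 d * (Pv d 0 ((1 - Wf S ω ξ)/2) * cos (dotZ ξ v)) := by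
      intro ξ; rw [Pv_one, Pv_zero]; ring
    rw [integral_congr_ae (ae_of_all _ e), integral_add ((hiW 0 v).const_mul _) ((hi 0 v).const_mul _),
      integral_const_mul, integral_const_mul]
    ring
  | succ n ih =>
    refine ⟨ih.2, fun v => ?_⟩
    rw [hrec (n+1) (by omega), conv_rep S ω hS hsymm _ (PW_cont (n+1) S ω) (x (n+1)) _ ih.2, ih.2 v,
      Nat.add_sub_cancel, ih.1 v]
    have e : ∀ ξ, Pv d (n+1+1) ((1 - Wf S ω ξ)/2) * cos (dotZ ξ v) =
        (aCoef d (n+1) * ((Wf S ω ξ * Pv d (n+1) ((1 - Wf S ω ξ)/2)) * cos (dotZ ξ v)) +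
        bCoef d (n+1) * (Pv d (n+1) ((1 - Wf S ω ξ)/2) * cos (dotZ ξ v))) -
        cCoef d (n+1) * (Pv d n ((1 - Wf S ω ξ)/2) * cos (dotZ ξ v)) := by
      intro ξ; rw [show n+1+1 = n+2 by ring, Pv_rec d hd]; ring
    have i1 := (hiW (n+1) v).const_mul (aCoef d (n+1))
    have i2 := (hi (n+1) v).const_mul (bCoef d (n+1))
    have i3 := (hi n v).const_mul (cCoef d (n+1))
    have i12 : Integrable (fun ξ => aCoef d (n+1) * ((Wf S ω ξ * Pv d (n+1) ((1 - Wf S ω ξ)/2)) * cos (dotZ ξ v)) +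
        bCoef d (n+1) * (Pv d (n+1) ((1 - Wf S ω ξ)/2) * cos (dotZ ξ v))) (volume.restrict (Cb d)) := i1.add i2
    rw [integral_congr_ae (ae_of_all _ e), integral_sub i12 i3, integral_add i1 i2,
      integral_const_mul, integral_const_mul, integral_const_mul]
    ring

open scoped MatrixOrder Matrix.Norms.L2Operator in
lemma exists_factor (d : ℕ) (Q : Matrix (Fin d) (Fin d) ℝ) (hQ : Q.PosDef) :
    ∃ B : Matrix (Fin d) (Fin d) ℝ, Q = Bᵀ * B := by
  obtain ⟨B, hB⟩ := CStarAlgebra.nonneg_iff_eq_star_mul_self.mp hQ.posSemidef.nonneg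
  refine ⟨B, ?_⟩
  rw [hB, Matrix.star_eq_conjTranspose, Matrix.conjTranspose_eq_transpose_of_trivial]

lemma Bs_sin (d : ℕ) (ζ : Fin d → ℝ) : ∫ w in Bs d, sin (∑ i, ζ i * w i) = 0 := by
  rw [← integral_indicator (Bs_meas d)]
  have h := integral_neg_eq_self ((Bs d).indicator (fun w : Fin d → ℝ => sin (∑ i, ζ i * w i))) volume
  have e : ∀ w : Fin d → ℝ, (Bs d).indicator (fun w : Fin d → ℝ => sin (∑ i, ζ i * w i)) (-w) =
      - (Bs d).indicator (fun w : Fin d → ℝ => sin (∑ i, ζ i * w i)) w := by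
    intro w
    have : (-w ∈ Bs d) ↔ w ∈ Bs d := by simp [Bs]
    by_cases hw : w ∈ Bs d
    · rw [Set.indicator_of_mem hw, Set.indicator_of_mem (this.2 hw)]; simp
    · rw [Set.indicator_of_notMem hw, Set.indicator_of_notMem (fun h => hw (this.1 h)), neg_zero]
  rw [integral_congr_ae (ae_of_all _ e), integral_neg] at h
  linarith

lemma bs_cos_shift (d : ℕ) (hd : 1 ≤ d) (ζ : Fin d → ℝ) (a : ℝ) :
    ∫ w in Bs d, cos (a - ∑ i, ζ i * w i) =
      π ^ ((d:ℝ)/2) / Real.Gamma ((d:ℝ)/2+1) * (Gs d ((∑ i, ζ i ^ 2)/4) * cos a) := by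
  have hi : ∀ g : (Fin d → ℝ) → ℝ, Continuous g → Integrable g (volume.restrict (Bs d)) := fun g hg =>
    hg.continuousOn.integrableOn_compact (Bs_compact d)
  have e : ∀ w : Fin d → ℝ, cos (a - ∑ i, ζ i * w i) = cos a * cos (∑ i, ζ i * w i) + sin a * sin (∑ i, ζ i * w i) :=
    fun w => Real.cos_sub _ _
  rw [integral_congr_ae (ae_of_all _ e), integral_add ((hi _ (by fun_prop)).const_mul _) ((hi _ (by fun_prop)).const_mul _),
    integral_const_mul, integral_const_mul, Bs_sin, ball_transform d hd]
  ring

lemma bs_sinc (d : ℕ) (hd : 1 ≤ d) (M : Matrix (Fin d) (Fin d) ℝ) (v : Fin d → ℤ) :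
    ∫ w in Bs d, ∏ i, sinc (π * ((v i : ℝ) - (M *ᵥ w) i)) =
      ((2*π)^d)⁻¹ * (π ^ ((d:ℝ)/2) / Real.Gamma ((d:ℝ)/2+1)) *
        ∫ ξ in Cb d, Gs d ((∑ i, (Mᵀ *ᵥ ξ) i ^ 2)/4) * cos (dotZ ξ v) := by
  have hK : (2*π)^d ≠ 0 := by have := pi_pos; positivity
  have e : ∀ w : Fin d → ℝ, ∏ i, sinc (π * ((v i : ℝ) - (M *ᵥ w) i)) =
      ((2*π)^d)⁻¹ * ∫ ξ in Cb d, cos (dotZ ξ v - ∑ i, (Mᵀ *ᵥ ξ) i * w i) := by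
    intro w
    rw [eq_inv_mul_iff_mul_eq₀ hK, ← cube_cos d (fun i => (v i : ℝ) - (M *ᵥ w) i)]
    apply integral_congr_ae (ae_of_all _ _)
    intro ξ
    congr 1
    have : ∑ i, (Mᵀ *ᵥ ξ) i * w i = ∑ i, ξ i * (M *ᵥ w) i := by
      change (Mᵀ *ᵥ ξ) ⬝ᵥ w = ξ ⬝ᵥ (M *ᵥ w)
      rw [Matrix.mulVec_transpose, Matrix.dotProduct_mulVec]
    rw [this, dotZ]
    simp [mul_sub]
  rw [integral_congr_ae (ae_of_all _ e), integral_const_mul]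
  have hfin : IsFiniteMeasure (volume.restrict (Bs d)) := ⟨by simpa using Bs_finite d⟩
  have hfin2 : IsFiniteMeasure (volume.restrict (Cb d)) := ⟨by simpa using (Cb_compact d).measure_lt_top⟩
  have hcont : Continuous (Function.uncurry fun (w ξ : Fin d → ℝ) => cos (dotZ ξ v - ∑ i, (Mᵀ *ᵥ ξ) i * w i)) := by
    unfold dotZ Matrix.mulVec dotProduct Function.uncurry
    fun_prop
  have hswap := integral_integral_swap (μ := volume.restrict (Bs d)) (ν := volume.restrict (Cb d))
    (f := fun (w ξ : Fin d → ℝ) => cos (dotZ ξ v - ∑ i, (Mᵀ *ᵥ ξ) i * w i)) (by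
      refine Integrable.of_bound (C := 1) hcont.aestronglyMeasurable (ae_of_all _ fun p => ?_)
      rw [Real.norm_eq_abs]; exact Real.abs_cos_le_one _)
  rw [hswap]
  have e2 : ∀ ξ : Fin d → ℝ, ∫ w in Bs d, cos (dotZ ξ v - ∑ i, (Mᵀ *ᵥ ξ) i * w i) = _ :=
    fun ξ => bs_cos_shift d hd (Mᵀ *ᵥ ξ) (dotZ ξ v)
  rw [integral_congr_ae (ae_of_all _ e2), integral_const_mul, mul_assoc]

lemma sinc_ae (d : ℕ) (v : Fin d → ℤ) : ∀ᵐ y : Fin d → ℝ,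
    ∏ i, Real.sin (π * ((v i : ℝ) - y i)) / (π * ((v i : ℝ) - y i)) = ∏ i, sinc (π * ((v i : ℝ) - y i)) := by
  have h : ∀ i : Fin d, ∀ᵐ y : Fin d → ℝ, y i ≠ v i := by
    intro i
    have := Measure.pi_hyperplane (fun _ : Fin d => (volume : Measure ℝ)) i (v i : ℝ)
    rw [ae_iff]
    simpa [volume_pi] using this
  filter_upwards [ae_all_iff.2 h] with y hy
  refine Finset.prod_congr rfl fun i _ => ?_
  rw [sinc_of_ne_zero (mul_ne_zero pi_ne_zero (sub_ne_zero.2 (hy i).symm))]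

lemma u_rep (d : ℕ) (hd : 1 ≤ d) (Q : Matrix (Fin d) (Fin d) ℝ) (hQ : Q.PosDef) (t : ℝ) (ht : 0 < t) (v : Fin d → ℤ) :
    ∫ y : Fin d → ℝ,
            (Real.Gamma ((d : ℝ) / 2 + 1) /
                (π ^ ((d : ℝ) / 2) * Real.sqrt Q.det * t ^ d)) *
              (if y ⬝ᵥ (Q⁻¹ *ᵥ y) ≤ t ^ 2 then 1 else 0) *
              (∏ i, Real.sin (π * ((v i : ℝ) - y i)) / (π * ((v i : ℝ) - y i))) =
    ((2*π)^d)⁻¹ * ∫ ξ in Cb d, Gs d (t^2 * (ξ ⬝ᵥ (Q *ᵥ ξ))/4) * cos (dotZ ξ v) := by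
  obtain ⟨B, hB⟩ := exists_factor d Q hQ
  have hdetQ : Q.det = B.det ^ 2 := by rw [hB, Matrix.det_mul, Matrix.det_transpose, sq]
  have hdet0 : B.det ≠ 0 := by
    intro h; have := hQ.det_pos; rw [hdetQ, h] at this; simp at this
  have hsqrt : √Q.det = |B.det| := by rw [hdetQ, sqrt_sq_eq_abs]
  set M : Matrix (Fin d) (Fin d) ℝ := t • Bᵀ with hM
  have hMdet : M.det = t^d * B.det := by rw [hM, Matrix.det_smul, Matrix.det_transpose]; simp
  have hMdet0 : M.det ≠ 0 := by rw [hMdet]; positivity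
  have hMabs : |M.det| = t^d * √Q.det := by rw [hMdet, abs_mul, hsqrt, abs_of_pos (by positivity)]
  set c := Real.Gamma ((d : ℝ) / 2 + 1) / (π ^ ((d : ℝ) / 2) * Real.sqrt Q.det * t ^ d) with hc
  set f : (Fin d → ℝ) → ℝ := fun y => c * (if y ⬝ᵥ (Q⁻¹ *ᵥ y) ≤ t ^ 2 then 1 else 0) *
    ∏ i, sinc (π * ((v i : ℝ) - y i)) with hf
  have e1 : ∫ y : Fin d → ℝ, c * (if y ⬝ᵥ (Q⁻¹ *ᵥ y) ≤ t ^ 2 then 1 else 0) *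
              (∏ i, Real.sin (π * ((v i : ℝ) - y i)) / (π * ((v i : ℝ) - y i))) = ∫ y, f y := by
    apply integral_congr_ae
    filter_upwards [sinc_ae d v] with y hy
    rw [hy]
  rw [e1]
  have hfm : Measurable f := by
    have hs : Measurable (fun y : Fin d → ℝ => ∏ i, sinc (π * ((v i : ℝ) - y i))) := by
      apply Continuous.measurable
      exact continuous_finsetProd _ fun i _ => continuous_sinc.comp (by fun_prop)
    refine (Measurable.const_mul (Measurable.ite ?_ measurable_const measurable_const) _).mul hs
    refine measurableSet_le (Continuous.measurable ?_) measurable_const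
    unfold Matrix.mulVec dotProduct; fun_prop
  have hmap := Real.map_matrix_volume_pi_eq_smul_volume_pi hMdet0
  have h2 : ∫ w, f (M *ᵥ w) = |M.det|⁻¹ * ∫ y, f y := by
    have : ∫ y, f y ∂(Measure.map (Matrix.toLin' M) volume) = ∫ w, f (Matrix.toLin' M w) :=
      integral_map (LinearMap.continuous_of_finiteDimensional _).measurable.aemeasurable hfm.aestronglyMeasurable
    rw [hmap, integral_smul_measure] at this
    simp only [Matrix.toLin'_apply] at this
    rw [← this, ENNReal.toReal_ofReal (abs_nonneg _), abs_inv, smul_eq_mul]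
  have h3 : ∫ y, f y = |M.det| * ∫ w, f (M *ᵥ w) := by
    rw [h2, mul_inv_cancel_left₀ (abs_ne_zero.2 hMdet0)]
  have hu : IsUnit B.det := isUnit_iff_ne_zero.2 hdet0
  have hut : IsUnit Bᵀ.det := by rwa [Matrix.det_transpose]
  have hquad : ∀ w : Fin d → ℝ, (M *ᵥ w) ⬝ᵥ (Q⁻¹ *ᵥ (M *ᵥ w)) = t^2 * ∑ i, w i ^ 2 := by
    intro w
    have a1 : Q⁻¹ *ᵥ (M *ᵥ w) = t • (B⁻¹ *ᵥ w) := by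
      rw [hM, Matrix.smul_mulVec, Matrix.mulVec_smul, hB, Matrix.mul_inv_rev, Matrix.mulVec_mulVec,
        Matrix.mul_assoc, Matrix.nonsing_inv_mul _ hut, Matrix.mul_one]
    rw [a1, hM, Matrix.smul_mulVec, smul_dotProduct, dotProduct_smul, Matrix.mulVec_transpose,
      ← Matrix.dotProduct_mulVec, Matrix.mulVec_mulVec, Matrix.mul_nonsing_inv _ hu, Matrix.one_mulVec]
    simp only [dotProduct, smul_eq_mul]
    rw [← mul_assoc, ← sq]
    simp only [← sq]
  have h4 : ∀ w : Fin d → ℝ, f (M *ᵥ w) = c * (Bs d).indicator (fun w => ∏ i, sinc (π * ((v i : ℝ) - (M *ᵥ w) i))) w := by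
    intro w
    simp only [hf]
    rw [hquad w]
    have : (t^2 * ∑ i, w i ^ 2 ≤ t^2) ↔ w ∈ Bs d := by
      simp only [Bs, Set.mem_ofPred_eq]
      have : 0 < t^2 := by positivity
      constructor
      · intro h; nlinarith
      · intro h; nlinarith
    by_cases hw : w ∈ Bs d
    · rw [Set.indicator_of_mem hw, if_pos (this.2 hw), mul_one]
    · rw [Set.indicator_of_notMem hw, if_neg (fun h => hw (this.1 h)), mul_zero, zero_mul]
  rw [h3, integral_congr_ae (ae_of_all _ h4), integral_const_mul, integral_indicator (Bs_meas d), bs_sinc d hd M v]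
  have hq2 : ∀ ξ : Fin d → ℝ, ∑ i, (Mᵀ *ᵥ ξ) i ^ 2 = t^2 * (ξ ⬝ᵥ (Q *ᵥ ξ)) := by
    intro ξ
    have : ∑ i, (Mᵀ *ᵥ ξ) i ^ 2 = (Mᵀ *ᵥ ξ) ⬝ᵥ (Mᵀ *ᵥ ξ) := by simp [dotProduct, sq]
    rw [this, hM, Matrix.transpose_smul, Matrix.transpose_transpose, Matrix.smul_mulVec, smul_dotProduct,
      dotProduct_smul, hB, ← Matrix.mulVec_mulVec, Matrix.dotProduct_mulVec ξ, Matrix.vecMul_transpose]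
    simp only [smul_eq_mul]; ring
  simp only [hq2]
  rw [hMabs, hc]
  have hG : Real.Gamma ((d:ℝ)/2+1) ≠ 0 := (Real.Gamma_pos_of_pos (by positivity)).ne'
  have hpi : π ^ ((d:ℝ)/2) ≠ 0 := (rpow_pos_of_pos pi_pos _).ne'
  have hs : √Q.det ≠ 0 := by rw [hsqrt]; exact abs_ne_zero.2 hdet0
  generalize Real.Gamma ((d:ℝ)/2+1) = G at *
  generalize π ^ ((d:ℝ)/2) = P at *
  generalize (∫ ξ in Cb d, Gs d (t^2 * (ξ ⬝ᵥ (Q *ᵥ ξ))/4) * cos (dotZ ξ v)) = J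
  have hK : (2*π)^d ≠ 0 := by have := pi_pos; positivity
  generalize (2*π)^d = K at *
  field_simp

lemma quad_eq {d : ℕ} (S : Finset (Fin d → ℤ)) (ω : (Fin d → ℤ) → ℝ) (hS : ∀ v, v ∉ S → ω v = 0) (ξ : Fin d → ℝ) :
    ξ ⬝ᵥ (covQ d ω *ᵥ ξ) = ∑ w ∈ S, ω w * dotZ ξ w ^ 2 := by
  have h : ∀ i j, covQ d ω i j = ∑ w ∈ S, ω w * (w i : ℝ) * (w j : ℝ) := by
    intro i j
    rw [covQ, Matrix.of_apply]
    exact tsum_eq_sum fun b hb => by rw [hS b hb]; ring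
  simp only [dotProduct, Matrix.mulVec, h, dotZ, sq, Finset.mul_sum, Finset.sum_mul]
  have e1 : ∀ i : Fin d, ∑ j, ∑ w ∈ S, ξ i * (ω w * (w i : ℝ) * (w j : ℝ) * ξ j) =
      ∑ w ∈ S, ∑ j, ξ i * (ω w * (w i : ℝ) * (w j : ℝ) * ξ j) := fun i => Finset.sum_comm
  rw [Finset.sum_congr rfl fun i _ => e1 i, Finset.sum_comm]
  refine Finset.sum_congr rfl fun w _ => ?_
  rw [Finset.sum_comm]
  exact Finset.sum_congr rfl fun i _ => Finset.sum_congr rfl fun j _ => by ring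

lemma ft_re {d : ℕ} (S : Finset (Fin d → ℤ)) (ω : (Fin d → ℤ) → ℝ) (hS : ∀ v, v ∉ S → ω v = 0) (ξ : Fin d → ℝ) :
    (ftOmega ω ξ).re = Wf S ω ξ := by
  rw [ftOmega, tsum_eq_sum (s := S) (fun b hb => by rw [hS b hb]; simp), Complex.re_sum, Wf]
  refine Finset.sum_congr rfl fun w _ => ?_
  rw [Complex.re_ofReal_mul, mul_comm Complex.I, Complex.exp_ofReal_mul_I_re, dotZ]

lemma y_eq {d : ℕ} (S : Finset (Fin d → ℤ)) (ω : (Fin d → ℤ) → ℝ) (h1 : ∑ w ∈ S, ω w = 1) (ξ : Fin d → ℝ) :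
    (1 - Wf S ω ξ)/2 = ∑ w ∈ S, ω w * sin (dotZ ξ w / 2) ^ 2 := by
  have e : ∀ w, ω w * sin (dotZ ξ w / 2)^2 = (ω w - ω w * cos (dotZ ξ w)) / 2 := by
    intro w
    rw [Real.sin_sq, Real.cos_sq, mul_div_cancel₀ _ (two_ne_zero)]; ring
  rw [Finset.sum_congr rfl fun w _ => e w, ← Finset.sum_div, Finset.sum_sub_distrib, h1, Wf]

lemma y_nonneg {d : ℕ} (S : Finset (Fin d → ℤ)) (ω : (Fin d → ℤ) → ℝ) (h1 : ∑ w ∈ S, ω w = 1)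
    (hnn : ∀ v, 0 ≤ ω v) (ξ : Fin d → ℝ) : 0 ≤ (1 - Wf S ω ξ)/2 := by
  rw [y_eq S ω h1]
  exact Finset.sum_nonneg fun w _ => mul_nonneg (hnn w) (sq_nonneg _)

lemma W_abs {d : ℕ} (S : Finset (Fin d → ℤ)) (ω : (Fin d → ℤ) → ℝ) (hS : ∀ v, v ∉ S → ω v = 0)
    (haper : ∀ ξ : Fin d → ℝ, (∀ i, ξ i ∈ Set.Icc (-π) π) → ξ ≠ 0 → ‖ftOmega ω ξ‖ < 1)
    (ξ : Fin d → ℝ) (hξ : ξ ∈ Cb d) (h0 : ξ ≠ 0) : |Wf S ω ξ| < 1 := by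
  rw [← ft_re S ω hS]
  exact (Complex.abs_re_le_norm _).trans_lt (haper ξ (fun i => hξ i (Set.mem_univ i)) h0)

lemma y_upper {d : ℕ} (S : Finset (Fin d → ℤ)) (ω : (Fin d → ℤ) → ℝ) (hS : ∀ v, v ∉ S → ω v = 0)
    (h1 : ∑ w ∈ S, ω w = 1)
    (haper : ∀ ξ : Fin d → ℝ, (∀ i, ξ i ∈ Set.Icc (-π) π) → ξ ≠ 0 → ‖ftOmega ω ξ‖ < 1) :
    ∃ δ : ℝ, 0 < δ ∧ ∀ ξ ∈ Cb d, (1 - Wf S ω ξ)/2 ≤ 1 - δ := by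
  obtain ⟨a, ha, h⟩ := (Cb_compact d).exists_forall_le' (Wf_cont S ω).continuousOn (a := -1) (by
    intro ξ hξ
    by_cases h0 : ξ = 0
    · subst h0
      have : Wf S ω (0 : Fin d → ℝ) = 1 := by rw [Wf, ← h1]; simp [dotZ]
      rw [this]; norm_num
    · exact (abs_lt.1 (W_abs S ω hS haper ξ hξ h0)).1)
  refine ⟨(1+a)/2, by linarith, fun ξ hξ => ?_⟩
  have := h ξ hξ
  linarith

lemma quad_lower {d : ℕ} (Q : Matrix (Fin d) (Fin d) ℝ) (hQ : Q.PosDef) :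
    ∃ c : ℝ, 0 < c ∧ ∀ ξ : Fin d → ℝ, c * ‖ξ‖^2 ≤ ξ ⬝ᵥ (Q *ᵥ ξ) := by
  have hc : Continuous (fun ξ : Fin d → ℝ => ξ ⬝ᵥ (Q *ᵥ ξ)) := by
    unfold Matrix.mulVec dotProduct; fun_prop
  obtain ⟨c, hc0, h⟩ := (isCompact_sphere (0 : Fin d → ℝ) 1).exists_forall_le' hc.continuousOn (a := 0) (by
    intro ξ hξ
    have : ξ ≠ 0 := by
      rintro rfl; simp at hξ
    simpa using hQ.dotProduct_mulVec_pos this)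
  refine ⟨c, hc0, fun ξ => ?_⟩
  by_cases h0 : ξ = 0
  · subst h0; simp
  · have hn : 0 < ‖ξ‖ := norm_pos_iff.2 h0
    have := h (‖ξ‖⁻¹ • ξ) (by simp [norm_smul, hn.ne'])
    rw [Matrix.mulVec_smul, smul_dotProduct, dotProduct_smul, smul_eq_mul, smul_eq_mul, ← mul_assoc] at this
    calc c * ‖ξ‖^2 ≤ (‖ξ‖⁻¹ * ‖ξ‖⁻¹ * ξ ⬝ᵥ (Q *ᵥ ξ)) * ‖ξ‖^2 := by gcongr
      _ = _ := by field_simp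

lemma dotZ_le {d : ℕ} (ξ : Fin d → ℝ) (w : Fin d → ℤ) : |dotZ ξ w| ≤ ‖ξ‖ * ∑ i, |(w i : ℝ)| := by
  rw [dotZ, Finset.mul_sum]
  refine (Finset.abs_sum_le_sum_abs _ _).trans (Finset.sum_le_sum fun i _ => ?_)
  rw [abs_mul]
  gcongr
  exact norm_le_pi_norm ξ i

lemma y_lower {d : ℕ} (S : Finset (Fin d → ℤ)) (ω : (Fin d → ℤ) → ℝ) (hS : ∀ v, v ∉ S → ω v = 0)
    (h1 : ∑ w ∈ S, ω w = 1) (hnn : ∀ v, 0 ≤ ω v) (hQ : (covQ d ω).PosDef)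
    (haper : ∀ ξ : Fin d → ℝ, (∀ i, ξ i ∈ Set.Icc (-π) π) → ξ ≠ 0 → ‖ftOmega ω ξ‖ < 1) :
    ∃ c : ℝ, 0 < c ∧ ∀ ξ ∈ Cb d, c * ‖ξ‖^2 ≤ (1 - Wf S ω ξ)/2 := by
  obtain ⟨c0, hc0, hq⟩ := quad_lower _ hQ
  set R : ℝ := 1 + ∑ w ∈ S, ∑ i, |(w i : ℝ)| with hR
  have hRpos : 0 < R := by positivity
  have hpi := pi_pos
  set r : ℝ := π / R with hr
  have hr0 : 0 < r := by positivity
  have hK : IsCompact (Cb d ∩ {ξ | r ≤ ‖ξ‖}) := (Cb_compact d).inter_right (isClosed_le continuous_const continuous_norm)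
  obtain ⟨a, ha, h⟩ := hK.exists_forall_le' (f := fun ξ => (1 - Wf S ω ξ)/2)
    (by have := Wf_cont S ω; exact Continuous.continuousOn (by fun_prop)) (a := 0) (by
    intro ξ hξ
    have h0 : ξ ≠ 0 := by
      rintro rfl
      have := hξ.2
      simp at this; linarith
    have := (abs_lt.1 (W_abs S ω hS haper ξ hξ.1 h0)).2
    linarith)
  refine ⟨min (c0/π^2) (a/π^2), by positivity, fun ξ hξ => ?_⟩
  by_cases hc : r ≤ ‖ξ‖
  · have h2 : ‖ξ‖ ≤ π := by
      rw [pi_norm_le_iff_of_nonneg hpi.le]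
      intro i
      exact abs_le.2 (hξ i (Set.mem_univ i))
    calc min (c0/π^2) (a/π^2) * ‖ξ‖^2 ≤ (a/π^2) * π^2 := by
          gcongr
          exact min_le_right _ _
      _ = a := by field_simp
      _ ≤ _ := h ξ ⟨hξ, hc⟩
  · push Not at hc
    calc min (c0/π^2) (a/π^2) * ‖ξ‖^2 ≤ (c0/π^2) * ‖ξ‖^2 := by
          gcongr
          exact min_le_left _ _
      _ = (c0 * ‖ξ‖^2) / π^2 := by ring
      _ ≤ (ξ ⬝ᵥ (covQ d ω *ᵥ ξ)) / π^2 := by gcongr; exact hq ξ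
      _ ≤ (1 - Wf S ω ξ)/2 := by
        rw [quad_eq S ω hS, y_eq S ω h1, Finset.sum_div]
        refine Finset.sum_le_sum fun w hw => ?_
        rw [mul_div_assoc]
        refine mul_le_mul_of_nonneg_left ?_ (hnn w)
        have hx : |dotZ ξ w| ≤ π := by
          refine (dotZ_le ξ w).trans ?_
          have h3 : ∑ i, |(w i : ℝ)| ≤ R := by
            have := Finset.single_le_sum (f := fun w : Fin d → ℤ => ∑ i, |(w i : ℝ)|) (s := S)
              (fun j _ => Finset.sum_nonneg fun i _ => abs_nonneg _) hw
            linarith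
          calc ‖ξ‖ * ∑ i, |(w i : ℝ)| ≤ r * R := by gcongr
            _ = π := by rw [hr]; field_simp
        have := Real.cos_le_one_sub_mul_cos_sq hx
        have e : sin (dotZ ξ w / 2)^2 = (1 - cos (dotZ ξ w))/2 := by
          rw [Real.sin_sq, Real.cos_sq, mul_div_cancel₀ _ (two_ne_zero)]; ring
        rw [e]
        have e2 : dotZ ξ w ^ 2 / π^2 = (2/π^2 * dotZ ξ w ^ 2)/2 := by ring
        rw [e2]
        linarith

lemma y_limit {d : ℕ} (S : Finset (Fin d → ℤ)) (ω : (Fin d → ℤ) → ℝ) (hS : ∀ v, v ∉ S → ω v = 0)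
    (h1 : ∑ w ∈ S, ω w = 1) (η : Fin d → ℝ) :
    Tendsto (fun n : ℕ => (n:ℝ)^2 * ((1 - Wf S ω ((n:ℝ)⁻¹ • η))/2)) atTop (𝓝 ((η ⬝ᵥ (covQ d ω *ᵥ η))/4)) := by
  simp only [y_eq S ω h1]
  rw [quad_eq S ω hS, Finset.sum_div]
  simp only [Finset.mul_sum]
  refine tendsto_finsetSum _ fun w _ => ?_
  set a := dotZ η w with ha
  have e : ∀ n : ℕ, 1 ≤ n → (n:ℝ)^2 * (ω w * sin (dotZ ((n:ℝ)⁻¹ • η) w / 2)^2) =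
      ω w * (a^2/4) * sinc (a/2 * (n:ℝ)⁻¹)^2 := by
    intro n hn
    have hn' : (n:ℝ) ≠ 0 := by positivity
    have e1 : dotZ ((n:ℝ)⁻¹ • η) w / 2 = a/2 * (n:ℝ)⁻¹ := by
      simp only [ha, dotZ, Pi.smul_apply, smul_eq_mul, mul_assoc, ← Finset.mul_sum]; ring
    rw [e1]
    by_cases h0 : a = 0
    · rw [h0]; simp
    · rw [sinc_of_ne_zero (by positivity)]
      field_simp
      ring
  have hl : Tendsto (fun n : ℕ => ω w * (a^2/4) * sinc (a/2 * (n:ℝ)⁻¹)^2) atTop (𝓝 (ω w * (a^2/4) * sinc (a/2 * 0)^2)) := by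
    refine Tendsto.const_mul _ (Tendsto.pow ?_ 2)
    exact (continuous_sinc.tendsto _).comp (tendsto_inv_atTop_nhds_zero_nat.const_mul _)
  have : ω w * a^2/4 = ω w * (a^2/4) * sinc (a/2 * 0)^2 := by simp; ring
  rw [this]
  refine hl.congr' ?_
  filter_upwards [eventually_ge_atTop 1] with n hn using (e n hn).symm

lemma D_limit (d : ℕ) (hd : 1 ≤ d) (S : Finset (Fin d → ℤ)) (ω : (Fin d → ℤ) → ℝ) (hS : ∀ v, v ∉ S → ω v = 0)
    (h1 : ∑ w ∈ S, ω w = 1) (hnn : ∀ v, 0 ≤ ω v) (hQ : (covQ d ω).PosDef)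
    (haper : ∀ ξ : Fin d → ℝ, (∀ i, ξ i ∈ Set.Icc (-π) π) → ξ ≠ 0 → ‖ftOmega ω ξ‖ < 1) :
    Tendsto (fun n : ℕ => (n:ℝ)^d * ∫ ξ in Cb d,
      (Pv d n ((1 - Wf S ω ξ)/2) - Gs d ((n:ℝ)^2 * (ξ ⬝ᵥ (covQ d ω *ᵥ ξ))/4))^2) atTop (𝓝 0) := by
  obtain ⟨δ, hδ, hup⟩ := y_upper S ω hS h1 haper
  obtain ⟨c, hc, hlow⟩ := y_lower S ω hS h1 hnn hQ haper
  obtain ⟨C, hC⟩ := decay_y d hd δ hδ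
  set D : ℕ → (Fin d → ℝ) → ℝ := fun n ξ =>
    Pv d n ((1 - Wf S ω ξ)/2) - Gs d ((n:ℝ)^2 * (ξ ⬝ᵥ (covQ d ω *ᵥ ξ))/4) with hD
  have hqc : Continuous (fun ξ : Fin d → ℝ => ξ ⬝ᵥ (covQ d ω *ᵥ ξ)) := by
    unfold Matrix.mulVec dotProduct; fun_prop
  have hDc : ∀ n, Continuous (D n) := fun n =>
    (PW_cont n S ω).sub ((Gs_continuous d).comp ((continuous_const.mul hqc).div_const _))
  have e0 : ∀ n : ℕ, (n:ℝ)^d * ∫ ξ in Cb d, (D n ξ)^2 = ∫ η, (Cb d).indicator (fun ξ => D n ξ ^ 2) ((n:ℝ)⁻¹ • η) := by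
    intro n
    rw [Measure.integral_comp_inv_smul_of_nonneg (μ := volume) _ (hR := Nat.cast_nonneg n),
      integral_indicator (Cb_meas d)]
    simp
  change Tendsto (fun n : ℕ => (n:ℝ)^d * ∫ ξ in Cb d, (D n ξ)^2) atTop (𝓝 0)
  simp only [e0]
  set m : ℝ := min 1 (√c) with hm
  have hm0 : 0 < m := lt_min one_pos (sqrt_pos.2 hc)
  -- bound on P
  have hP : ∀ n : ℕ, 4*d ≤ n → ∀ η : Fin d → ℝ, (n:ℝ)⁻¹ • η ∈ Cb d →
      Pv d n ((1 - Wf S ω ((n:ℝ)⁻¹ • η))/2)^2 ≤ C / m^(d+1) * (1+‖η‖)^(-((d:ℝ)+1)) := by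
    intro n hn η hη
    have hn0 : (0:ℝ) < n := by exact_mod_cast (by omega : 0 < n)
    set ξ := (n:ℝ)⁻¹ • η with hξ
    have hnorm : ‖ξ‖ = ‖η‖ / n := by rw [hξ, norm_smul, norm_inv, Real.norm_natCast]; ring
    have ha := hC n hn _ (y_nonneg S ω h1 hnn ξ) (hup ξ hη)
    have hb : √c * ‖ξ‖ ≤ √((1 - Wf S ω ξ)/2) := by
      have := Real.sqrt_le_sqrt (hlow ξ hη)
      rwa [Real.sqrt_mul hc.le, Real.sqrt_sq (norm_nonneg _)] at this
    have hb2 : m * (1 + ‖η‖) ≤ 1 + n * √((1 - Wf S ω ξ)/2) := by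
      have i1 : (n:ℝ) * (√c * ‖ξ‖) ≤ n * √((1 - Wf S ω ξ)/2) := by gcongr
      have i2 : (n:ℝ) * (√c * ‖ξ‖) = √c * ‖η‖ := by rw [hnorm]; field_simp
      have i3 : m ≤ 1 := min_le_left _ _
      have i4 : m * ‖η‖ ≤ √c * ‖η‖ := by gcongr; exact min_le_right _ _
      linarith
    have hpos : 0 < 1 + ‖η‖ := by positivity
    have hb3 : (m * (1 + ‖η‖))^(d+1) * Pv d n ((1 - Wf S ω ξ)/2)^2 ≤ C :=
      le_trans (by gcongr) ha
    have hr : (1+‖η‖)^(-((d:ℝ)+1)) = ((1+‖η‖)^(d+1))⁻¹ := by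
      rw [rpow_neg hpos.le]; congr 1
      exact_mod_cast rpow_natCast (1+‖η‖) (d+1)
    rw [hr, mul_pow] at *
    rw [← div_eq_mul_inv, le_div_iff₀ (by positivity), le_div_iff₀ (by positivity)]
    linarith
  have hlimP : ∀ η : Fin d → ℝ, Tendsto (fun n : ℕ => Pv d n ((1 - Wf S ω ((n:ℝ)⁻¹ • η))/2)) atTop
      (𝓝 (Gs d ((η ⬝ᵥ (covQ d ω *ᵥ η))/4))) := fun η =>
    mehler_heine d _ _ (fun n => y_nonneg S ω h1 hnn _) (y_limit S ω hS h1 η)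
  have hev : ∀ η : Fin d → ℝ, ∀ᶠ n : ℕ in atTop, (n:ℝ)⁻¹ • η ∈ Cb d := by
    intro η
    have ht : Tendsto (fun n : ℕ => (n:ℝ)⁻¹ • η) atTop (𝓝 ((0:ℝ) • η)) :=
      tendsto_inv_atTop_nhds_zero_nat.smul_const η
    rw [zero_smul] at ht
    refine ht.eventually_mem ?_
    exact set_pi_mem_nhds Set.finite_univ fun i _ => Icc_mem_nhds (by simp [pi_pos]) (by simp [pi_pos])
  have hG : ∀ η : Fin d → ℝ, Gs d ((η ⬝ᵥ (covQ d ω *ᵥ η))/4)^2 ≤ C / m^(d+1) * (1+‖η‖)^(-((d:ℝ)+1)) := by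
    intro η
    refine le_of_tendsto ((hlimP η).pow 2) ?_
    filter_upwards [hev η, eventually_ge_atTop (4*d)] with n h2 h3 using hP n h3 η h2
  have hDeq : ∀ n : ℕ, 1 ≤ n → ∀ η : Fin d → ℝ, D n ((n:ℝ)⁻¹ • η) =
      Pv d n ((1 - Wf S ω ((n:ℝ)⁻¹ • η))/2) - Gs d ((η ⬝ᵥ (covQ d ω *ᵥ η))/4) := by
    intro n hn η
    have hn0 : (n:ℝ) ≠ 0 := by positivity
    simp only [hD]
    congr 2
    rw [Matrix.mulVec_smul, smul_dotProduct, dotProduct_smul, smul_eq_mul, smul_eq_mul]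
    field_simp
  rw [show (0:ℝ) = ∫ η : Fin d → ℝ, (0:ℝ) by simp]
  refine tendsto_integral_filter_of_dominated_convergence
    (fun η => 4 * (C / m^(d+1) * (1+‖η‖)^(-((d:ℝ)+1)))) ?_ ?_ ?_ ?_
  · refine Eventually.of_forall fun n => ?_
    have hmeas : Measurable ((Cb d).indicator (fun ξ => D n ξ ^ 2)) :=
      ((hDc n).pow 2).measurable.indicator (Cb_meas d)
    exact (hmeas.comp (measurable_const_smul _)).aestronglyMeasurable
  · filter_upwards [eventually_ge_atTop (4*d)] with n hn
    refine ae_of_all _ fun η => ?_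
    by_cases hη : (n:ℝ)⁻¹ • η ∈ Cb d
    · rw [Set.indicator_of_mem hη, hDeq n (by omega), Real.norm_eq_abs, abs_of_nonneg (sq_nonneg _)]
      have i1 := hP n hn η hη
      have i2 := hG η
      generalize Pv d n ((1 - Wf S ω ((n:ℝ)⁻¹ • η))/2) = p at *
      generalize Gs d ((η ⬝ᵥ (covQ d ω *ᵥ η))/4) = g at *
      nlinarith [sq_nonneg (p + g)]
    · rw [Set.indicator_of_notMem hη, norm_zero]
      have := (sq_nonneg _).trans (hG η)
      linarith
  · refine Integrable.const_mul (Integrable.const_mul (integrable_one_add_norm ?_) _) _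
    simp
  · refine ae_of_all _ fun η => ?_
    have hl : Tendsto (fun n : ℕ => (Pv d n ((1 - Wf S ω ((n:ℝ)⁻¹ • η))/2) - Gs d ((η ⬝ᵥ (covQ d ω *ᵥ η))/4))^2) atTop (𝓝 0) := by
      have := ((hlimP η).sub_const (Gs d ((η ⬝ᵥ (covQ d ω *ᵥ η))/4))).pow 2
      simpa using this
    refine hl.congr' ?_
    filter_upwards [hev η, eventually_ge_atTop 1] with n h2 h3
    rw [Set.indicator_of_mem h2, hDeq n h3]

/-- Local convergence of the Jacobi polynomial iteration to the sinc-filtered fundamental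
solution of the Euler–Poisson–Darboux equation. -/
theorem jacobi_iteration_local_convergence
    (d : ℕ) (hd : 1 ≤ d) (ω : (Fin d → ℤ) → ℝ)
    (hfin : (Function.support ω).Finite) (hnn : ∀ v, 0 ≤ ω v)
    (hmass : ∑' v : Fin d → ℤ, ω v = 1) (hsymm : ∀ v, ω (-v) = ω v)
    (hQ : (covQ d ω).PosDef)
    (haper : ∀ ξ : Fin d → ℝ, (∀ i, ξ i ∈ Set.Icc (-π) π) → ξ ≠ 0 →
      ‖ftOmega ω ξ‖ < 1)
    (x : ℕ → (Fin d → ℤ) → ℝ)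
    (hx0 : ∀ v, x 0 v = if v = 0 then 1 else 0)
    (hx1 : ∀ v, x 1 v = aCoef0 d * latticeConv ω (x 0) v + bCoef0 d * x 0 v)
    (hrec : ∀ n, 1 ≤ n → ∀ v,
      x (n + 1) v = aCoef d n * latticeConv ω (x n) v + bCoef d n * x n v - cCoef d n * x (n - 1) v) :
    Tendsto (fun n : ℕ => (n : ℝ) ^ d * ∑' v : Fin d → ℤ,
        (x n v - ∫ y : Fin d → ℝ,
            (Real.Gamma ((d : ℝ) / 2 + 1) /
                (π ^ ((d : ℝ) / 2) * Real.sqrt (covQ d ω).det * (n : ℝ) ^ d)) *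
              (if y ⬝ᵥ ((covQ d ω)⁻¹ *ᵥ y) ≤ (n : ℝ) ^ 2 then 1 else 0) *
              (∏ i, Real.sin (π * ((v i : ℝ) - y i)) / (π * ((v i : ℝ) - y i)))) ^ 2)
      atTop (𝓝 0) := by
  set S := hfin.toFinset with hSdef
  have hS : ∀ v, v ∉ S → ω v = 0 := by
    intro v hv; simpa [hSdef] using hv
  have h1 : ∑ w ∈ S, ω w = 1 := by rw [← hmass, tsum_eq_sum hS]
  have hlim := D_limit d hd S ω hS h1 hnn hQ haper
  have hK : (0:ℝ) < (2*π)^d := by have := pi_pos; positivity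
  have hlim2 := hlim.const_mul (((2*π)^d)⁻¹)
  rw [mul_zero] at hlim2
  refine tendsto_of_tendsto_of_tendsto_of_le_of_le' tendsto_const_nhds hlim2 ?_ ?_
  · exact Eventually.of_forall fun n => mul_nonneg (by positivity) (tsum_nonneg fun _ => sq_nonneg _)
  · filter_upwards [eventually_ge_atTop 1] with n hn
    have hn0 : (0:ℝ) < n := by exact_mod_cast hn
    set D : (Fin d → ℝ) → ℝ := fun ξ =>
      Pv d n ((1 - Wf S ω ξ)/2) - Gs d ((n:ℝ)^2 * (ξ ⬝ᵥ (covQ d ω *ᵥ ξ))/4) with hD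
    have hqc : Continuous (fun ξ : Fin d → ℝ => ξ ⬝ᵥ (covQ d ω *ᵥ ξ)) := by
      unfold Matrix.mulVec dotProduct; fun_prop
    have hGc : Continuous (fun ξ : Fin d → ℝ => Gs d ((n:ℝ)^2 * (ξ ⬝ᵥ (covQ d ω *ᵥ ξ))/4)) :=
      (Gs_continuous d).comp ((continuous_const.mul hqc).div_const _)
    have hDc : Continuous D := (PW_cont n S ω).sub hGc
    have e : ∀ v, (x n v - ∫ y : Fin d → ℝ,
            (Real.Gamma ((d : ℝ) / 2 + 1) /
                (π ^ ((d : ℝ) / 2) * Real.sqrt (covQ d ω).det * (n : ℝ) ^ d)) *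
              (if y ⬝ᵥ ((covQ d ω)⁻¹ *ᵥ y) ≤ (n : ℝ) ^ 2 then 1 else 0) *
              (∏ i, Real.sin (π * ((v i : ℝ) - y i)) / (π * ((v i : ℝ) - y i)))) ^ 2 =
        (((2*π)^d)⁻¹)^2 * (∫ ξ in Cb d, D ξ * cos (dotZ ξ v))^2 := by
      intro v
      rw [u_rep d hd _ hQ n hn0 v, (x_rep hd S ω hS hsymm x hx0 hx1 hrec n).1 v, ← mul_sub, mul_pow]
      have hcc : Continuous (fun ξ : Fin d → ℝ => cos (dotZ ξ v)) := Real.continuous_cos.comp (dotZ_cont _)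
      have j1 : IntegrableOn (fun ξ => Pv d n ((1 - Wf S ω ξ)/2) * cos (dotZ ξ v)) (Cb d) volume :=
        Cb_int ((PW_cont n S ω).mul hcc)
      have j2 : IntegrableOn (fun ξ => Gs d ((n:ℝ)^2 * (ξ ⬝ᵥ (covQ d ω *ᵥ ξ))/4) * cos (dotZ ξ v)) (Cb d) volume :=
        Cb_int (hGc.mul hcc)
      rw [← integral_sub j1 j2]
      simp only [hD, sub_mul]
    rw [tsum_congr e, tsum_mul_left]
    have hb := bessel d D hDc
    calc (n:ℝ)^d * ((((2*π)^d)⁻¹)^2 * ∑' v : Fin d → ℤ, (∫ ξ in Cb d, D ξ * cos (dotZ ξ v))^2)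
        ≤ (n:ℝ)^d * ((((2*π)^d)⁻¹)^2 * ((2*π)^d * ∫ ξ in Cb d, D ξ ^ 2)) := by gcongr
      _ = ((2*π)^d)⁻¹ * ((n:ℝ)^d * ∫ ξ in Cb d, D ξ ^ 2) := by field_simp
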